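/- arXiv:1506.07148 — 2 statements merged into one kernel-verified Lean document; each statement's English description precedes it below -/
import Mathlib

section
/- Let H be a finite CDG with a unique minimal normal subgroup N, and assume N is a q-group for a prime q. Let p be a prime different from q such that p − 1 is divisible by an odd prime r different from q. Then there exist an extraspecial p-group E and an action of H × Z_r by automorphisms on E such that the semidirect product G = E ⋊ (H × Z_r) satisfies: G is a CDG, the Fitting subgroup of G is E, and Z(E) is the unique minimal normal subgroup of G. In particular, if H is solvable, then the Fitting height of G is one more than the Fitting height of H. -/
/-!
Let `W` be the space of functions `H → 𝔽_p` whose sums over all cosets of `N` vanish. It is a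
nonzero `𝔽_p[H]`-module on which `N` has no nonzero fixed vector; since `N` is the unique minimal
normal subgroup of `H`, the kernel of the action would contain `N` if it were nontrivial, so the
action is faithful. Take `E = W × W* × 𝔽_p` with the Heisenberg multiplication, which is
extraspecial. Embed `Z_r` in `𝔽_p^×` by `u`, and let `c ∈ Z_r` act by the scalar `u c` on both `W`
and `W*`, hence by `(u c) ^ 2` on the centre `𝔽_p`; as `r` is odd, this last action is also
fixed-point-free.

A nontrivial normal subgroup of `G = E ⋊ (H × Z_r)` contains `Z(E)`, because `H × Z_r` acts
faithfully on `E / Z(E)` (`Heis.centerInl_le_of_normal`). So `Z(E)` is the unique minimal normal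
subgroup, every nilpotent normal subgroup is a `p`-group (`Heis.isPGroup_of_nilpotent`), and `E` is
the Fitting subgroup because `H × Z_r` has no nontrivial normal `p`-subgroup.

For the degrees, let `V` be an irreducible representation of `G`. If a group `Q` of prime power
order `q ^ n` permutes the weights of an abelian group `A` in `V` without fixing one that occurs,
then `q ∣ dim V` (`dvd_finrank_of_no_fixed_weight`). This is applied as follows.
* If `Z(E)` acts nontrivially, then `p ∣ dim V` (with `A = W* × Z(E)` and `Q = W`) and
  `r ∣ dim V` (with `A = Z(E)` and `Q = Z_r`).
* If `Z(E)` acts trivially but `E` does not, then `q ∣ dim V` and `r ∣ dim V` (with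
  `A = E / Z(E)` and `Q = N` or `Q = Z_r`).
* If `E` acts trivially, then `Z_r` acts by scalars, so `V` is irreducible for `H` and `dim V` is
  a degree of `H`.
In the first two cases `dim V` has two distinct prime divisors, and in the third one the hypothesis
on `H` applies.

Finally, a shortest normal series of `G` with nilpotent quotients can be compared with one of `H`
because `G / E = H × Z_r` with `Z_r` nilpotent (`fittingHeight_succ`).
-/

/-- The set of degrees of the irreducible complex characters of `G`. -/
def charDegrees (G : Type) [Group G] : Set ℕ :=
  {d | ∃ V : FDRep ℂ G, CategoryTheory.Simple V ∧ Module.finrank ℂ V = d}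

/-- `G` is a *composite degree group* (CDG): `1` is the only prime power among the degrees of
the irreducible complex characters of `G`. -/
def IsCDG (G : Type) [Group G] : Prop :=
  ∀ d ∈ charDegrees G, IsPrimePow d → d = 1

/-- The quotient `B/A` (for normal subgroups `A ≤ B` of `G`) is a nilpotent group. -/
def IsNilpotentQuot {G : Type*} [Group G] (A B : Subgroup G) [A.Normal] : Prop :=
  Group.IsNilpotent (↥(B.map (QuotientGroup.mk' A)))

/-- `F` is a normal series `⊥ = F 0 ≤ F 1 ≤ ⋯ ≤ F n = ⊤` of normal subgroups of `G`
with every quotient `F (i+1) / F i` nilpotent. -/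
def IsFittingSeries {G : Type*} [Group G] (F : ℕ → Subgroup G) (n : ℕ) : Prop :=
  F 0 = ⊥ ∧ F n = ⊤ ∧ (∀ i, (F i).Normal) ∧ (∀ i, i < n → F i ≤ F (i + 1)) ∧
    ∀ i, i < n → ∀ hi : (F i).Normal, @IsNilpotentQuot G _ (F i) (F (i + 1)) hi

/-- The Fitting height of `G` equals `n`: `n` is the length of a shortest normal series of `G`
with nilpotent quotients. -/
def FittingHeightIs (G : Type*) [Group G] (n : ℕ) : Prop :=
  (∃ F : ℕ → Subgroup G, IsFittingSeries F n) ∧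
    ∀ m : ℕ, (∃ F : ℕ → Subgroup G, IsFittingSeries F m) → n ≤ m

/-- `N` is a minimal normal subgroup of `G`: it is nontrivial, normal, and contains no smaller
nontrivial normal subgroup of `G`. -/
def IsMinimalNormal {G : Type*} [Group G] (N : Subgroup G) : Prop :=
  N.Normal ∧ N ≠ ⊥ ∧ ∀ M : Subgroup G, M.Normal → M ≤ N → M = ⊥ ∨ M = N

/-- `N` is the unique minimal normal subgroup of `G`. -/
def IsUniqueMinimalNormal (G : Type*) [Group G] (N : Subgroup G) : Prop :=
  IsMinimalNormal N ∧ ∀ M : Subgroup G, IsMinimalNormal M → M = N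

/-- `F` is the Fitting subgroup of `G`: the largest nilpotent normal subgroup of `G`. -/
def IsFittingSubgroup {G : Type*} [Group G] (F : Subgroup G) : Prop :=
  F.Normal ∧ Group.IsNilpotent ↥F ∧
    ∀ K : Subgroup G, K.Normal → Group.IsNilpotent ↥K → K ≤ F

/-- An extraspecial `p`-group: a `p`-group whose center and commutator subgroup coincide
and have order `p`. -/
def IsExtraspecial (p : ℕ) (E : Type*) [Group E] : Prop :=
  IsPGroup p E ∧ Subgroup.center E = commutator E ∧ Nat.card (Subgroup.center E) = p

/-! ### Irreducible representations and character degrees -/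

/-- A complex representation all of whose invariant subspaces are trivial. -/
def InvTrivial {G V : Type} [Group G] [AddCommGroup V] [Module ℂ V]
    (ρ : Representation ℂ G V) : Prop :=
  ∀ U : Submodule ℂ V, (∀ g, ∀ v ∈ U, ρ g v ∈ U) → U = ⊥ ∨ U = ⊤

open CategoryTheory in
theorem invTrivial_of_simple {G : Type} [Group G] (V : FDRep ℂ G) (hV : Simple V) :
    InvTrivial V.ρ := by
  intro U hU
  let σ : Representation ℂ G U :=
    { toFun := fun g => (V.ρ g).restrict (hU g)
      map_one' := by ext; simp
      map_mul' := by intro x y; ext; simp }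
  let f : (forget₂ (FDRep ℂ G) (Rep ℂ G)).obj (FDRep.of σ) ⟶
      (forget₂ (FDRep ℂ G) (Rep ℂ G)).obj V :=
    Rep.ofHom ⟨U.subtype, fun g => by ext x; rfl⟩
  let ι : FDRep.of σ ⟶ V := FDRep.forget₂HomLinearEquiv _ _ f
  have hι : ∀ u : U, ι u = (u : V) := fun u => rfl
  have hmono : Mono ι := ConcreteCategory.mono_of_injective _ (fun a b hab => by
    exact Subtype.ext hab)
  by_cases h0 : ι = 0
  · left
    rw [Submodule.eq_bot_iff]
    intro x hx
    have h1 := hι ⟨x, hx⟩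
    rw [h0] at h1
    exact h1.symm
  · right
    have hiso : IsIso ι := isIso_of_mono_of_nonzero h0
    rw [Submodule.eq_top_iff']
    intro x
    have h2 : ι ((inv ι : V ⟶ FDRep.of σ) x) = x := by
      rw [← ConcreteCategory.comp_apply, IsIso.inv_hom_id]; rfl
    rw [← h2]
    exact (((inv ι : V ⟶ FDRep.of σ) x : U)).2

open CategoryTheory in
theorem nontrivial_of_simple {G : Type} [Group G] (V : FDRep ℂ G) (hV : Simple V) :
    Nontrivial V := by
  by_contra h
  rw [not_nontrivial_iff_subsingleton] at h
  apply Simple.not_isZero V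
  rw [Limits.IsZero.iff_id_eq_zero]
  ext x
  exact Subsingleton.elim (α := V) _ _

open CategoryTheory in
/-- Schur's lemma: an eigenspace of an intertwining operator is an invariant subspace, so the
endomorphisms are scalars, which characterizes simplicity as `G` is finite. -/
theorem simple_of_invTrivial {G : Type} [Group G] [Finite G] {V : Type} [AddCommGroup V]
    [Module ℂ V] [Module.Finite ℂ V] [Nontrivial V] (ρ : Representation ℂ G V)
    (h : InvTrivial ρ) : Simple (FDRep.of ρ) := by
  rw [FDRep.simple_iff_end_is_rank_one]
  have hne : (𝟙 (FDRep.of ρ) : FDRep.of ρ ⟶ FDRep.of ρ) ≠ 0 := by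
    intro h0
    obtain ⟨v, hv⟩ := exists_ne (0 : V)
    have h1 : (𝟙 (FDRep.of ρ) : FDRep.of ρ ⟶ FDRep.of ρ) (v : V) = v := rfl
    rw [h0] at h1
    exact hv h1.symm
  rw [finrank_eq_one_iff_of_nonzero' _ hne]
  intro f
  let F : V →ₗ[ℂ] V := ((FDRep.forget₂HomLinearEquiv _ _).symm f).hom.toLinearMap
  have hF : ∀ g v, F (ρ g v) = ρ g (F v) := fun g v =>
    LinearMap.congr_fun (((FDRep.forget₂HomLinearEquiv _ _).symm f).hom.isIntertwining' g) v
  obtain ⟨c, hc⟩ := Module.End.exists_eigenvalue F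
  refine ⟨c, ?_⟩
  have htop : Module.End.eigenspace F c = ⊤ := by
    refine (h _ ?_).resolve_left hc
    intro g v hv
    rw [Module.End.mem_eigenspace_iff] at hv ⊢
    rw [hF, hv, map_smul]
  ext v
  have : v ∈ Module.End.eigenspace F c := by rw [htop]; trivial
  rw [Module.End.mem_eigenspace_iff] at this
  exact this.symm

theorem mem_charDegrees {G : Type} [Group G] [Finite G] {V : Type} [AddCommGroup V]
    [Module ℂ V] [Module.Finite ℂ V] [Nontrivial V] (ρ : Representation ℂ G V)
    (h : InvTrivial ρ) : Module.finrank ℂ V ∈ charDegrees G :=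
  ⟨FDRep.of ρ, simple_of_invTrivial ρ h, rfl⟩

/-! ### Weights permuted by a group of prime power order -/

/-- The weight space of the character `ψ` for a family of operators `α` indexed by `A`. -/
def weightSpace {A V : Type} [AddCommGroup A] [AddCommGroup V] [Module ℂ V]
    (α : A → Module.End ℂ V) (ψ : AddChar A ℂ) : Submodule ℂ V where
  carrier := {v | ∀ a, α a v = ψ a • v}
  add_mem' := by
    intro v w hv hw a
    rw [map_add, hv a, hw a, smul_add]
  zero_mem' := by intro a; simp
  smul_mem' := by
    intro c v hv a
    rw [map_smul, hv a, smul_comm]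

theorem mem_weightSpace {A V : Type} [AddCommGroup A] [AddCommGroup V] [Module ℂ V]
    {α : A → Module.End ℂ V} {ψ : AddChar A ℂ} {v : V} :
    v ∈ weightSpace α ψ ↔ ∀ a, α a v = ψ a • v := Iff.rfl

/-- The dimension is the sum of the weight multiplicities: the operators
`e ψ = |A|⁻¹ ∑ a, ψ (-a) α a` project onto the weight spaces and add up to `1`, so it suffices
to take traces. -/
theorem sum_finrank_weightSpace {A V : Type} [AddCommGroup A] [Finite A] [AddCommGroup V]
    [Module ℂ V] [Module.Finite ℂ V] (α : A → Module.End ℂ V) (h0 : α 0 = 1)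
    (hadd : ∀ a b, α (a + b) = α a * α b) [Fintype (AddChar A ℂ)] :
    ∑ ψ : AddChar A ℂ, Module.finrank ℂ (weightSpace α ψ) = Module.finrank ℂ V := by
  classical
  have := Fintype.ofFinite A
  set n : ℂ := (Fintype.card A : ℂ) with hn
  have hn0 : n ≠ 0 := by rw [hn]; exact_mod_cast Fintype.card_ne_zero
  let e : AddChar A ℂ → Module.End ℂ V := fun ψ => n⁻¹ • ∑ a, ψ (-a) • α a
  have hαe : ∀ ψ b, α b * e ψ = ψ b • e ψ := by
    intro ψ b
    simp only [e]
    rw [mul_smul_comm, smul_comm]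
    congr 1
    rw [Finset.mul_sum, Finset.smul_sum]
    refine Fintype.sum_equiv (Equiv.addLeft b) _ _ ?_
    intro a
    simp only [Equiv.coe_addLeft]
    rw [mul_smul_comm, ← hadd, smul_smul, ← AddChar.map_add_eq_mul]
    congr 2
    abel
  have hproj : ∀ ψ, LinearMap.IsProj (weightSpace α ψ) (e ψ) := by
    intro ψ
    constructor
    · intro v b
      have := LinearMap.congr_fun (hαe ψ b) v
      simpa using this
    · intro v hv
      simp only [e, LinearMap.smul_apply, LinearMap.sum_apply]
      have : ∀ a ∈ Finset.univ, ψ (-a) • (α a) v = v := by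
        intro a _
        rw [hv a, smul_smul, ← AddChar.map_add_eq_mul]
        simp
      rw [Finset.sum_congr rfl this, Finset.sum_const, Finset.card_univ,
        ← Nat.cast_smul_eq_nsmul ℂ, smul_smul, inv_mul_cancel₀ hn0, one_smul]
  have hsum : ∑ ψ, e ψ = 1 := by
    simp only [e]
    rw [← Finset.smul_sum, Finset.sum_comm]
    have : ∀ a ∈ Finset.univ, ∑ ψ : AddChar A ℂ, ψ (-a) • α a
        = if a = 0 then n • (1 : Module.End ℂ V) else 0 := by
      intro a _
      rw [← Finset.sum_smul]
      have h1 := AddChar.sum_apply_eq_ite (-a)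
      simp only [neg_eq_zero] at h1
      split_ifs with ha
      · rw [if_pos ha] at h1
        rw [ha, h0]
        congr 1
        rw [hn, ← h1, ha]
        convert rfl
      · rw [if_neg ha] at h1
        have h2 : ∑ ψ : AddChar A ℂ, ψ (-a) = 0 := by rw [← h1]; convert rfl
        rw [h2, zero_smul]
    rw [Finset.sum_congr rfl this, Finset.sum_ite_eq' Finset.univ (0 : A), if_pos (Finset.mem_univ _),
      smul_smul, inv_mul_cancel₀ hn0, one_smul]
  have htr := congrArg (LinearMap.trace ℂ V) hsum
  rw [map_sum, LinearMap.trace_one] at htr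
  have : ∀ ψ ∈ Finset.univ, LinearMap.trace ℂ V (e ψ)
      = ((Module.finrank ℂ (weightSpace α ψ) : ℕ) : ℂ) := fun ψ _ => (hproj ψ).trace
  rw [Finset.sum_congr rfl this] at htr
  exact_mod_cast htr

theorem card_dvd_of_no_fixed {Q X : Type} [Group Q] [MulAction Q X] [Finite X]
    {q : ℕ} [Fact q.Prime] (hQ : IsPGroup q Q) (h : ∀ x : X, ∃ g : Q, g • x ≠ x) :
    q ∣ Nat.card X := by
  have h1 := hQ.card_modEq_card_fixedPoints X
  have : IsEmpty (MulAction.fixedPoints Q X) := by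
    constructor
    rintro ⟨x, hx⟩
    obtain ⟨g, hg⟩ := h x
    exact hg (hx g)
  rw [Nat.card_of_isEmpty (α := MulAction.fixedPoints Q X)] at h1
  exact (Nat.modEq_zero_iff_dvd).1 h1

/-- If a `q`-group permutes a finite set and fixes no point where the invariant function `f` is
nonzero, then `q` divides the sum of `f`, as it divides the size of each level set. -/
theorem dvd_sum_of_invariant {Q X : Type} [Group Q] [MulAction Q X] [Fintype X]
    {q : ℕ} [Fact q.Prime] (hQ : IsPGroup q Q) (f : X → ℕ) (hf : ∀ (g : Q) x, f (g • x) = f x)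
    (h : ∀ x : X, (∀ g : Q, g • x = x) → f x = 0) :
    q ∣ ∑ x, f x := by
  classical
  have h1 := Finset.sum_comp (s := Finset.univ) (fun n : ℕ => n) f
  rw [h1]
  refine Finset.dvd_sum ?_
  intro k _
  by_cases hk : k = 0
  · simp [hk]
  rw [smul_eq_mul]
  refine Dvd.dvd.mul_right ?_ _
  let S : SubMulAction Q X := ⟨{x | f x = k}, by intro g x hx; simpa [hf] using hx⟩
  have h2 : q ∣ Nat.card S := by
    refine card_dvd_of_no_fixed hQ ?_
    rintro ⟨x, hx⟩
    by_contra hcon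
    push Not at hcon
    have : f x = 0 := h x (fun g => by simpa using congrArg Subtype.val (hcon g))
    exact hk (by rw [← this]; exact hx.symm)
  have h3 : Nat.card S = (Finset.univ.filter (fun a => f a = k)).card := by
    rw [← Fintype.card_subtype, ← Nat.card_eq_fintype_card]
    rfl
  rwa [h3] at h2

/-- A `q`-group `Q` acting on the finite abelian group `A`, compatibly with operators of both on
`V`, permutes the weights of `A`; if it fixes no weight then `q` divides `dim V`. -/
theorem dvd_finrank_of_no_fixed_weight {A V Q : Type} [AddCommGroup A] [Finite A] [AddCommGroup V]
    [Module ℂ V] [Module.Finite ℂ V] [Group Q] {q : ℕ} [Fact q.Prime] (hQ : IsPGroup q Q)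
    (α : A → Module.End ℂ V) (h0 : α 0 = 1)
    (hadd : ∀ a b, α (a + b) = α a * α b)
    (θ : Q →* AddMonoid.End A) (β : Q →* Module.End ℂ V)
    (hβ : ∀ x a, β x * α a = α (θ x a) * β x)
    (hno : ∀ ψ : AddChar A ℂ, (∀ x a, ψ (θ x a) = ψ a) → weightSpace α ψ = ⊥) :
    q ∣ Module.finrank ℂ V := by
  classical
  have := Fintype.ofFinite (AddChar A ℂ)
  rw [← sum_finrank_weightSpace α h0 hadd]
  let act : MulAction Q (AddChar A ℂ) :=
    { smul := fun x ψ => ψ.compAddMonoidHom (θ x⁻¹)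
      one_smul := by
        intro ψ
        ext a
        change ψ (θ 1⁻¹ a) = ψ a
        simp
      mul_smul := by
        intro x y ψ
        ext a
        change ψ (θ (x * y)⁻¹ a) = ψ (θ y⁻¹ (θ x⁻¹ a))
        rw [mul_inv_rev, map_mul]; rfl }
  have hact : ∀ (x : Q) (ψ : AddChar A ℂ) a, (x • ψ) a = ψ (θ x⁻¹ a) := fun _ _ _ => rfl
  have hinv : ∀ x a, θ x (θ x⁻¹ a) = a := by
    intro x a
    have : (θ x * θ x⁻¹) a = a := by rw [← map_mul]; simp
    exact this
  have hinj : ∀ x : Q, Function.Injective (β x) := by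
    intro x v w h
    have h1 : ∀ v, β x⁻¹ (β x v) = v := by
      intro v
      have : (β x⁻¹ * β x) v = v := by rw [← map_mul]; simp
      exact this
    rw [← h1 v, h, h1]
  have hle : ∀ (x : Q) ψ, Module.finrank ℂ (weightSpace α ψ)
      ≤ Module.finrank ℂ (weightSpace α (x • ψ)) := by
    intro x ψ
    have hm : ∀ v ∈ weightSpace α ψ, β x v ∈ weightSpace α (x • ψ) := by
      intro v hv a
      have h1 := LinearMap.congr_fun (hβ x (θ x⁻¹ a)) v
      rw [hinv] at h1
      simp only [Module.End.mul_apply] at h1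
      rw [← h1, hv, map_smul, hact]
    refine LinearMap.finrank_le_finrank_of_injective (f := (β x).restrict hm) ?_
    intro v w h
    exact Subtype.ext (hinj x (congrArg Subtype.val h))
  refine dvd_sum_of_invariant hQ _ ?_ ?_
  · intro x ψ
    refine le_antisymm ?_ (hle x ψ)
    have := hle x⁻¹ (x • ψ)
    rwa [inv_smul_smul] at this
  · intro ψ hψ
    rw [hno ψ]
    · simp
    · intro x a
      have := hact x⁻¹ ψ a
      rw [hψ, inv_inv] at this
      exact this.symm

/-- The case where `A` is elementary abelian of exponent `p ∤ |Q|`, with `∑ x, θ x a = 0` for all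
`a` and without nonzero fixed vectors in `V`: a `Q`-invariant character `ψ` has `ψ a ^ |Q| = 1`
as well as `ψ a ^ p = 1`, so it is trivial and its weight space is zero. -/
theorem dvd_finrank_of_coprime {A V Q : Type} [AddCommGroup A] [Finite A] [AddCommGroup V]
    [Module ℂ V] [Module.Finite ℂ V] [Group Q] [Fintype Q] {q : ℕ} [Fact q.Prime]
    (hQ : IsPGroup q Q)
    (α : A → Module.End ℂ V) (h0 : α 0 = 1)
    (hadd : ∀ a b, α (a + b) = α a * α b)
    (θ : Q →* AddMonoid.End A) (β : Q →* Module.End ℂ V)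
    (hβ : ∀ x a, β x * α a = α (θ x a) * β x)
    (p : ℕ) (hp : ∀ a : A, p • a = 0) (hcop : (Fintype.card Q).Coprime p)
    (hsum : ∀ a, ∑ x, θ x a = 0)
    (hfix : ∀ v, (∀ a, α a v = v) → v = 0) :
    q ∣ Module.finrank ℂ V := by
  refine dvd_finrank_of_no_fixed_weight hQ α h0 hadd θ β hβ ?_
  intro ψ hψ
  have h1 : ∀ a, ψ a = 1 := by
    intro a
    have hQa : ψ a ^ Fintype.card Q = 1 := by
      have h2 : ψ (∑ x, θ x a) = ∏ x : Q, ψ (θ x a) := by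
        exact map_prod ψ.toMonoidHom (fun x => Multiplicative.ofAdd (θ x a)) Finset.univ
      rw [hsum] at h2
      simpa [hψ] using h2.symm
    have hpa : ψ a ^ p = 1 := by rw [← AddChar.map_nsmul_eq_pow, hp]; simp
    have := pow_gcd_eq_one.2 ⟨hQa, hpa⟩
    rwa [hcop, pow_one] at this
  rw [Submodule.eq_bot_iff]
  intro v hv
  exact hfix v (fun a => by rw [hv a, h1, one_smul])

/-! ### Heisenberg groups -/

/-- The Heisenberg group `W × W* × 𝔽_p` of a vector space `W` over `𝔽_p`, with multiplication
`(w, f, z) (w', f', z') = (w + w', f + f', z + z' + f' w)`. -/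
@[ext]
structure Heis (p : ℕ) (W : Type) [AddCommGroup W] [Module (ZMod p) W] where
  /-- The coordinate in `W`. -/
  w : W
  /-- The coordinate in the dual of `W`. -/
  f : Module.Dual (ZMod p) W
  /-- The central coordinate. -/
  z : ZMod p

namespace Heis

open scoped commutatorElement

variable {p : ℕ} {W : Type} [AddCommGroup W] [Module (ZMod p) W]

instance : Mul (Heis p W) := ⟨fun a b => ⟨a.w + b.w, a.f + b.f, a.z + b.z + b.f a.w⟩⟩
instance : One (Heis p W) := ⟨⟨0, 0, 0⟩⟩
instance : Inv (Heis p W) := ⟨fun a => ⟨-a.w, -a.f, -a.z + a.f a.w⟩⟩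

@[simp] theorem mul_w (a b : Heis p W) : (a * b).w = a.w + b.w := rfl
@[simp] theorem mul_f (a b : Heis p W) : (a * b).f = a.f + b.f := rfl
@[simp] theorem mul_z (a b : Heis p W) : (a * b).z = a.z + b.z + b.f a.w := rfl
@[simp] theorem one_w : (1 : Heis p W).w = 0 := rfl
@[simp] theorem one_f : (1 : Heis p W).f = 0 := rfl
@[simp] theorem one_z : (1 : Heis p W).z = 0 := rfl
@[simp] theorem inv_w (a : Heis p W) : (a⁻¹).w = -a.w := rfl
@[simp] theorem inv_f (a : Heis p W) : (a⁻¹).f = -a.f := rfl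
@[simp] theorem inv_z (a : Heis p W) : (a⁻¹).z = -a.z + a.f a.w := rfl

instance : Group (Heis p W) :=
  Group.ofLeftAxioms
    (by intro a b c; ext <;> simp [add_assoc]; ring)
    (by intro a; ext <;> simp)
    (by intro a; ext <;> simp)

instance [Finite W] [NeZero p] : Finite (Heis p W) := by
  have : Finite (Module.Dual (ZMod p) W) := Module.finite_of_finite (ZMod p)
  refine Finite.of_injective
    (fun a : Heis p W => ((a.w, a.f, a.z) : W × Module.Dual (ZMod p) W × ZMod p)) ?_
  intro a b h
  simp only [Prod.mk.injEq] at h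
  exact Heis.ext h.1 h.2.1 h.2.2

/-- The central element `(0, 0, z)`. -/
def ofZ (z : ZMod p) : Heis p W := ⟨0, 0, z⟩

theorem mem_center [Fact p.Prime] {a : Heis p W} :
    a ∈ Subgroup.center (Heis p W) ↔ a.w = 0 ∧ a.f = 0 := by
  rw [Subgroup.mem_center_iff]
  constructor
  · intro h
    constructor
    · rw [← Module.forall_dual_apply_eq_zero_iff (ZMod p)]
      intro f
      have := congrArg Heis.z (h ⟨0, f, 0⟩)
      simpa using this.symm
    · ext w
      have := congrArg Heis.z (h ⟨w, 0, 0⟩)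
      simpa using this
  · rintro ⟨h1, h2⟩ b
    ext <;> simp [h1, h2, add_comm]

theorem ofZ_mem_center [Fact p.Prime] (z : ZMod p) :
    (ofZ z : Heis p W) ∈ Subgroup.center (Heis p W) := mem_center.2 ⟨rfl, rfl⟩

/-- Commutators are central, and the central coordinate is the symplectic form. -/
theorem commutator_eq (a b : Heis p W) : ⁅a, b⁆ = ofZ (b.f a.w - a.f b.w) := by
  rw [commutatorElement_def]
  ext <;> simp [ofZ]
  ring

theorem exists_dual_eq [Fact p.Prime] {w : W} (hw : w ≠ 0) (z : ZMod p) :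
    ∃ f : Module.Dual (ZMod p) W, f w = z := by
  have h := (Module.forall_dual_apply_eq_zero_iff (ZMod p) w).not.2 hw
  push Not at h
  obtain ⟨f, hf⟩ := h
  exact ⟨(z * (f w)⁻¹) • f, by simp [hf]⟩

theorem center_eq_commutator [Fact p.Prime] [Nontrivial W] :
    Subgroup.center (Heis p W) = commutator (Heis p W) := by
  apply le_antisymm
  · intro a ha
    rw [mem_center] at ha
    obtain ⟨w, hw⟩ := exists_ne (0 : W)
    obtain ⟨f, hf⟩ := exists_dual_eq hw a.z
    have h1 : a = ⁅(⟨w, 0, 0⟩ : Heis p W), ⟨0, f, 0⟩⁆ := by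
      rw [commutator_eq]
      ext <;> simp [ofZ, hf, ha]
    rw [h1]
    exact Subgroup.commutator_mem_commutator (Subgroup.mem_top _) (Subgroup.mem_top _)
  · rw [commutator_def, Subgroup.commutator_le]
    intro a _ b _
    rw [commutator_eq]
    exact ofZ_mem_center _

theorem card_center [Fact p.Prime] : Nat.card (Subgroup.center (Heis p W)) = p := by
  have e : Subgroup.center (Heis p W) ≃ ZMod p :=
    { toFun := fun a => a.1.z
      invFun := fun z => ⟨ofZ z, ofZ_mem_center z⟩
      left_inv := by
        rintro ⟨a, ha⟩
        have := mem_center.1 ha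
        apply Subtype.ext
        ext <;> simp [ofZ, this]
      right_inv := fun z => rfl }
  rw [Nat.card_congr e, Nat.card_zmod]

theorem ofZ_pow (z : ZMod p) (n : ℕ) : (ofZ z : Heis p W) ^ n = ofZ ((n : ZMod p) * z) := by
  induction n with
  | zero => ext <;> simp [ofZ]
  | succ n ih => rw [pow_succ, ih]; ext <;> simp [ofZ]; ring

theorem pow_w (a : Heis p W) (n : ℕ) : (a ^ n).w = n • a.w := by
  induction n with
  | zero => simp
  | succ n ih => rw [pow_succ, mul_w, ih, succ_nsmul]

theorem pow_f (a : Heis p W) (n : ℕ) : (a ^ n).f = n • a.f := by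
  induction n with
  | zero => simp
  | succ n ih => rw [pow_succ, mul_f, ih, succ_nsmul]

theorem p_nsmul {M : Type} [AddCommGroup M] [Module (ZMod p) M] (m : M) : p • m = 0 := by
  rw [← Nat.cast_smul_eq_nsmul (ZMod p)]; simp

theorem isPGroup : IsPGroup p (Heis p W) := by
  intro a
  refine ⟨2, ?_⟩
  have h : a ^ p = ofZ (a ^ p).z := by
    ext <;> simp [ofZ, pow_w, pow_f, p_nsmul]
  rw [pow_two, pow_mul, h, ofZ_pow]
  ext <;> simp [ofZ]

theorem isExtraspecial [Fact p.Prime] [Nontrivial W] : IsExtraspecial p (Heis p W) :=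
  ⟨isPGroup, center_eq_commutator, card_center⟩

section Action

variable {L : Type} [Group L] (τ : L →* Module.End (ZMod p) W)
  (σ : L →* Module.End (ZMod p) (Module.Dual (ZMod p) W)) (μ : L →* ZMod p)
  (hμ : ∀ l f w, σ l f (τ l w) = μ l * f w)

/-- Linear actions on `W` and its dual under which the pairing is multiplied by the character `μ`
induce an action on the Heisenberg group. -/
def act : L →* MulAut (Heis p W) where
  toFun l :=
    { toFun := fun a => ⟨τ l a.w, σ l a.f, μ l * a.z⟩
      invFun := fun a => ⟨τ l⁻¹ a.w, σ l⁻¹ a.f, μ l⁻¹ * a.z⟩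
      left_inv := by
        intro a
        ext1
        · exact LinearMap.congr_fun (show τ l⁻¹ * τ l = 1 by rw [← map_mul]; simp) _
        · exact LinearMap.congr_fun (show σ l⁻¹ * σ l = 1 by rw [← map_mul]; simp) _
        · simp only [← mul_assoc, ← map_mul]; simp
      right_inv := by
        intro a
        ext1
        · exact LinearMap.congr_fun (show τ l * τ l⁻¹ = 1 by rw [← map_mul]; simp) _
        · exact LinearMap.congr_fun (show σ l * σ l⁻¹ = 1 by rw [← map_mul]; simp) _
        · simp only [← mul_assoc, ← map_mul]; simp
      map_mul' := by
        intro a b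
        ext1 <;> simp [hμ, mul_add] }
  map_one' := by
    refine MulEquiv.ext fun a => ?_
    ext1 <;> simp
  map_mul' := by
    intro x y
    refine MulEquiv.ext fun a => ?_
    ext1 <;> simp [mul_assoc]

@[simp] theorem act_w (l : L) (a : Heis p W) : (act τ σ μ hμ l a).w = τ l a.w := rfl
@[simp] theorem act_f (l : L) (a : Heis p W) : (act τ σ μ hμ l a).f = σ l a.f := rfl
@[simp] theorem act_z (l : L) (a : Heis p W) : (act τ σ μ hμ l a).z = μ l * a.z := rfl

end Action

end Heis

/-! ### The normal subgroups of the semidirect product -/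

namespace Heis

open scoped commutatorElement

variable {p : ℕ} [Fact p.Prime] {W : Type} [AddCommGroup W] [Module (ZMod p) W] [Finite W]
  [Nontrivial W] {L : Type} [Group L] [Finite L] (τ : L →* Module.End (ZMod p) W)
  (σ : L →* Module.End (ZMod p) (Module.Dual (ZMod p) W)) (μ : L →* ZMod p)
  (hμ : ∀ l f w, σ l f (τ l w) = μ l * f w)

/-- The subgroup `Z(E)` of `E ⋊ L`. -/
abbrev centerInl : Subgroup (Heis p W ⋊[act τ σ μ hμ] L) :=
  (Subgroup.center (Heis p W)).map SemidirectProduct.inl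

instance : (centerInl τ σ μ hμ).Normal := by
  constructor
  rintro _ ⟨a, ha, rfl⟩ g
  refine ⟨(g * SemidirectProduct.inl a * g⁻¹).left, ?_, ?_⟩
  · have h := mem_center.1 ha
    apply mem_center.2
    simp [h]
  · ext <;> simp

omit [Finite W] [Nontrivial W] [Finite L] in
/-- A subgroup containing one element `(0, 0, z)` with `z ≠ 0` contains `Z(E)`. -/
theorem centerInl_le_of_ofZ_mem (M : Subgroup (Heis p W ⋊[act τ σ μ hμ] L)) (z : ZMod p)
    (hz : z ≠ 0) (hzM : SemidirectProduct.inl (ofZ z) ∈ M) : centerInl τ σ μ hμ ≤ M := by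
  rintro _ ⟨a, ha, rfl⟩
  have h := mem_center.1 ha
  have h1 : a = (ofZ z) ^ (a.z * z⁻¹).val := by
    rw [ofZ_pow, ZMod.natCast_zmod_val, inv_mul_cancel_right₀ hz]
    ext <;> simp [ofZ, h]
  rw [h1, map_pow]
  exact M.pow_mem hzM _

omit [Finite W] [Nontrivial W] [Finite L] in
/-- A normal subgroup meeting `E` nontrivially contains `Z(E)`: if the element `a` of the
intersection is not central, a commutator of `a` with a suitable element of `E` is a nontrivial
central element. -/
theorem centerInl_le_of_inl_mem (M : Subgroup (Heis p W ⋊[act τ σ μ hμ] L)) [M.Normal]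
    (a : Heis p W) (ha : a ≠ 1) (haM : SemidirectProduct.inl a ∈ M) :
    centerInl τ σ μ hμ ≤ M := by
  have key : ∀ b : Heis p W, b.f a.w - a.f b.w ≠ 0 → centerInl τ σ μ hμ ≤ M := by
    intro b hb
    refine centerInl_le_of_ofZ_mem τ σ μ hμ M _ hb ?_
    rw [← commutator_eq, map_commutatorElement, commutatorElement_def, mul_assoc, mul_assoc,
      ← mul_assoc (SemidirectProduct.inl b)]
    exact M.mul_mem haM (Subgroup.Normal.conj_mem inferInstance _ (M.inv_mem haM) _)
  by_cases hw : a.w = 0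
  · by_cases hf : a.f = 0
    · refine centerInl_le_of_ofZ_mem τ σ μ hμ M a.z ?_ ?_
      · intro hz
        exact ha (Heis.ext hw hf hz)
      · have : a = ofZ a.z := by ext <;> simp [ofZ, hw, hf]
        rwa [← this]
    · obtain ⟨w, hfw⟩ : ∃ w, a.f w ≠ 0 := by
        by_contra hcon
        push Not at hcon
        exact hf (LinearMap.ext hcon)
      exact key ⟨w, 0, 0⟩ (by simpa using hfw)
  · obtain ⟨f, hf⟩ := exists_dual_eq (p := p) hw 1
    exact key ⟨0, f, 0⟩ (by simp [hf])

variable (hfaith : ∀ l, (∀ w, τ l w = w) → (∀ f, σ l f = f) → l = 1)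

omit [Finite W] [Nontrivial W] [Finite L] in
include hfaith in
/-- Every nontrivial normal subgroup `M` contains `Z(E)`: an element outside `E` acts
nontrivially on `E / Z(E)`, so it has a nontrivial commutator with some element of `E`. -/
theorem centerInl_le_of_normal (M : Subgroup (Heis p W ⋊[act τ σ μ hμ] L)) [M.Normal]
    (hM : M ≠ ⊥) : centerInl τ σ μ hμ ≤ M := by
  by_contra hcon
  have hE : ∀ a : Heis p W, SemidirectProduct.inl a ∈ M → a = 1 := by
    intro a ha
    by_contra h
    exact hcon (centerInl_le_of_inl_mem τ σ μ hμ M a h ha)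
  apply hM
  rw [Subgroup.eq_bot_iff_forall]
  intro m hm
  have hcomm : ∀ e : Heis p W, (m * SemidirectProduct.inl e * m⁻¹) = SemidirectProduct.inl e := by
    intro e
    have h1 : m * SemidirectProduct.inl e * m⁻¹ * (SemidirectProduct.inl e)⁻¹ ∈ M := by
      rw [mul_assoc, mul_assoc, ← mul_assoc (SemidirectProduct.inl e)]
      exact M.mul_mem hm (Subgroup.Normal.conj_mem inferInstance _ (M.inv_mem hm) _)
    have h2 : m * SemidirectProduct.inl e * m⁻¹ * (SemidirectProduct.inl e)⁻¹
        = SemidirectProduct.inl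
          (m * SemidirectProduct.inl e * m⁻¹ * (SemidirectProduct.inl e)⁻¹).left := by
      ext <;> simp
    rw [h2] at h1
    rw [hE _ h1, map_one] at h2
    exact mul_inv_eq_one.1 h2
  have hr : m.right = 1 := by
    apply hfaith
    · intro w
      have := congrArg (fun g => g.left.w) (hcomm ⟨w, 0, 0⟩)
      simpa using this
    · intro f
      have := congrArg (fun g => g.left.f) (hcomm ⟨0, f, 0⟩)
      simpa using this
  have h3 : m = SemidirectProduct.inl m.left := by ext <;> simp [hr]
  rw [h3] at hm ⊢
  rw [hE _ hm, map_one]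

omit [Finite W] [Nontrivial W] [Finite L] in
theorem card_centerInl : Nat.card (centerInl τ σ μ hμ) = p := by
  refine Eq.trans ?_ (card_center (p := p) (W := W))
  exact (Nat.card_congr ((Subgroup.center (Heis p W)).equivMapOfInjective _
    SemidirectProduct.inl_injective).toEquiv).symm

omit [Finite W] [Nontrivial W] [Finite L] in
theorem centerInl_ne_bot : centerInl τ σ μ hμ ≠ ⊥ := by
  intro h
  have := card_centerInl τ σ μ hμ
  rw [h, Subgroup.card_bot] at this
  exact (Fact.out : p.Prime).one_lt.ne this

omit [Finite W] [Nontrivial W] [Finite L] in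
include hfaith in
theorem isUniqueMinimalNormal :
    IsUniqueMinimalNormal (Heis p W ⋊[act τ σ μ hμ] L) (centerInl τ σ μ hμ) := by
  refine ⟨⟨inferInstance, centerInl_ne_bot τ σ μ hμ, ?_⟩, ?_⟩
  · intro M hM hle
    by_cases h : M = ⊥
    · exact Or.inl h
    · exact Or.inr (le_antisymm hle (centerInl_le_of_normal τ σ μ hμ hfaith M h))
  · rintro M ⟨hM, hne, hmin⟩
    have := hmin _ inferInstance (centerInl_le_of_normal τ σ μ hμ hfaith M hne)
    exact (this.resolve_left (centerInl_ne_bot τ σ μ hμ)).symm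

omit [Nontrivial W] in
include hfaith in
/-- A normal nilpotent subgroup of `E ⋊ L` is a `p`-group: its Sylow subgroups are normal in
`E ⋊ L`, so the nontrivial ones contain the group `Z(E)` of order `p`. -/
theorem isPGroup_of_nilpotent (K : Subgroup (Heis p W ⋊[act τ σ μ hμ] L)) [K.Normal]
    (hK : Group.IsNilpotent K) : IsPGroup p K := by
  have hp : p.Prime := Fact.out
  have : Finite (Heis p W ⋊[act τ σ μ hμ] L) :=
    Finite.of_equiv _ SemidirectProduct.equivProd.symm
  have key : ∀ s : ℕ, s.Prime → s ∣ Nat.card K → s = p := by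
    intro s hs hdvd
    have : Fact s.Prime := ⟨hs⟩
    let S : Sylow s K := default
    have hSn : (S : Subgroup K).Normal := inferInstance
    have hSc : (S : Subgroup K).Characteristic := Sylow.characteristic_of_normal S hSn
    have hne : ((S : Subgroup K).map K.subtype) ≠ ⊥ := by
      rw [Ne, Subgroup.map_eq_bot_iff_of_injective _ K.subtype_injective]
      exact S.ne_bot_of_dvd_card hdvd
    have h1 := centerInl_le_of_normal τ σ μ hμ hfaith _ hne
    have h2 : IsPGroup s (centerInl τ σ μ hμ) := (S.isPGroup'.map K.subtype).to_le h1
    obtain ⟨n, hn⟩ := IsPGroup.iff_card.1 h2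
    rw [card_centerInl] at hn
    exact ((Nat.prime_dvd_prime_iff_eq hp hs).1
      (hp.dvd_of_dvd_pow (n := n) (by rw [← hn]))).symm
  rw [IsPGroup.iff_card]
  exact ⟨_, Nat.eq_prime_pow_of_unique_prime_dvd Nat.card_pos.ne' (fun {d} => key d)⟩

variable (hL : ∀ M : Subgroup L, M.Normal → IsPGroup p M → M = ⊥)

omit [Nontrivial W] in
include hfaith hL in
/-- `E` is the Fitting subgroup: the image in `L` of a nilpotent normal subgroup is a normal
`p`-subgroup. -/
theorem isFittingSubgroup :
    IsFittingSubgroup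
      (SemidirectProduct.inl : Heis p W →* Heis p W ⋊[act τ σ μ hμ] L).range := by
  have hpg : IsPGroup p
      (SemidirectProduct.inl : Heis p W →* Heis p W ⋊[act τ σ μ hμ] L).range :=
    isPGroup.of_surjective _ (MonoidHom.rangeRestrict_surjective _)
  have : Finite (Heis p W ⋊[act τ σ μ hμ] L) :=
    Finite.of_equiv _ SemidirectProduct.equivProd.symm
  refine ⟨?_, hpg.isNilpotent, ?_⟩
  · rw [SemidirectProduct.range_inl_eq_ker_rightHom]
    infer_instance
  · intro K hK hnil
    have h1 := isPGroup_of_nilpotent τ σ μ hμ hfaith K hnil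
    have h2 : K.map SemidirectProduct.rightHom = ⊥ :=
      hL _ (hK.map _ SemidirectProduct.rightHom_surjective) (h1.map _)
    rw [SemidirectProduct.range_inl_eq_ker_rightHom]
    exact (Subgroup.map_eq_bot_iff _).1 h2

end Heis

/-! ### Fitting height -/

theorem isNilpotent_of_injective {G G' : Type*} [Group G] [Group G'] (f : G →* G')
    (hf : Function.Injective f) (h : Group.IsNilpotent G') : Group.IsNilpotent G :=
  Group.isNilpotent_congr (MonoidHom.ofInjective hf) |>.2 inferInstance

theorem isNilpotent_map {G G' : Type*} [Group G] [Group G'] (f : G →* G') (K : Subgroup G)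
    (h : Group.IsNilpotent K) : Group.IsNilpotent (K.map f) :=
  Group.nilpotent_of_surjective (f.subgroupMap K) (f.subgroupMap_surjective K)

theorem isNilpotentQuot_bot {G : Type*} [Group G] (B : Subgroup G) :
    IsNilpotentQuot (⊥ : Subgroup G) B ↔ Group.IsNilpotent B := by
  have hinj : Function.Injective (QuotientGroup.mk' (⊥ : Subgroup G)) := by
    rw [← MonoidHom.ker_eq_bot_iff, QuotientGroup.ker_mk']
  exact (Group.isNilpotent_congr (B.equivMapOfInjective _ hinj)).symm

/-- Images of normal pairs with nilpotent quotient have nilpotent quotient. -/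
theorem isNilpotentQuot_map {G G' : Type*} [Group G] [Group G'] (f : G →* G')
    (A B : Subgroup G) [A.Normal] (A' : Subgroup G') [A'.Normal] (hA : A' = A.map f)
    (h : IsNilpotentQuot A B) : IsNilpotentQuot A' (B.map f) := by
  unfold IsNilpotentQuot at h ⊢
  have hle : A ≤ A'.comap f := by rw [hA]; exact Subgroup.le_comap_map _ _
  have := isNilpotent_map (QuotientGroup.map A A' f hle) _ h
  rw [Subgroup.map_map] at this ⊢
  exact this

/-- Preimages of normal pairs with nilpotent quotient have nilpotent quotient. -/
theorem isNilpotentQuot_comap {G G' : Type*} [Group G] [Group G'] (f : G →* G')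
    (A' B' : Subgroup G') [A'.Normal] (A : Subgroup G) [A.Normal] (hA : A = A'.comap f)
    (h : IsNilpotentQuot A' B') : IsNilpotentQuot A (B'.comap f) := by
  unfold IsNilpotentQuot at h ⊢
  have hinj : Function.Injective (QuotientGroup.map A A' f hA.le) := by
    rw [← MonoidHom.ker_eq_bot_iff, QuotientGroup.ker_map, ← hA, Subgroup.map_eq_bot_iff,
      QuotientGroup.ker_mk']
  have hle : ((B'.comap f).map (QuotientGroup.mk' A)).map (QuotientGroup.map A A' f hA.le)
      ≤ B'.map (QuotientGroup.mk' A') := by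
    rintro _ ⟨_, ⟨b, hb, rfl⟩, rfl⟩
    exact ⟨f b, hb, rfl⟩
  refine isNilpotent_of_injective
    (((QuotientGroup.map A A' f hA.le).comp (Subgroup.subtype _)).codRestrict
      (B'.map (QuotientGroup.mk' A')) ?_) ?_ h
  · rintro ⟨x, hx⟩
    exact hle ⟨x, hx, rfl⟩
  · intro x y hxy
    exact Subtype.ext (hinj (congrArg Subtype.val hxy))

/-- If the Fitting subgroup of `G` is the kernel of a surjection `π : G → H × C` with `C` nilpotent
and `H` nontrivial, then a Fitting series of `H` lifts to one of `G` that is longer by one step,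
and the image in `H` of any Fitting series of `G` is a Fitting series that starts one step
later. -/
theorem fittingHeight_succ {G H C : Type} [Group G] [Nontrivial G] [Group H] [Nontrivial H]
    [Group C] [Group.IsNilpotent C] (π : G →* H × C) (hπ : Function.Surjective π)
    (hF : IsFittingSubgroup π.ker) (h : ℕ) (hH : FittingHeightIs H h) :
    FittingHeightIs G (h + 1) := by
  obtain ⟨⟨F, hF0, hFn, hFnorm, hFmono, hFnil⟩, hmin⟩ := hH
  let πH : G →* H := (MonoidHom.fst H C).comp π
  have hπH : Function.Surjective πH := Prod.fst_surjective.comp hπ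
  have hh : h ≠ 0 := by
    rintro rfl
    exact bot_ne_top (hF0.symm.trans hFn)
  constructor
  · refine ⟨fun n => match n with
      | 0 => ⊥
      | 1 => π.ker
      | (k + 2) => (F (k + 1)).comap πH, rfl, ?_, ?_, ?_, ?_⟩
    · obtain ⟨k, rfl⟩ := Nat.exists_eq_succ_of_ne_zero hh
      change (F (k + 1)).comap πH = ⊤
      rw [hFn, Subgroup.comap_top]
    · rintro (_ | _ | k)
      · exact Subgroup.normal_bot
      · exact MonoidHom.normal_ker π
      · exact (hFnorm _).comap πH
    · rintro (_ | _ | k) hk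
      · exact bot_le
      · intro g hg
        change πH g ∈ F 1
        have : πH g = 1 := congrArg Prod.fst (MonoidHom.mem_ker.1 hg)
        rw [this]
        exact one_mem _
      · exact Subgroup.comap_mono (hFmono (k + 1) (by omega))
    -- `G` has the series `1 ≤ ker π ≤ π⁻¹ (F 1 × C) ≤ π⁻¹ (F 2 × C) ≤ ⋯`, so the second quotient
    -- is `F 1 × C` and the later ones embed in those of `H`.
    · rintro (_ | _ | k) hk hi
      · exact (isNilpotentQuot_bot _).2 hF.2.1
      · change @IsNilpotentQuot G _ π.ker ((F 1).comap πH) hi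
        have h1 : (F 1).comap πH = ((F 1).comap (MonoidHom.fst H C)).comap π := rfl
        rw [h1]
        refine isNilpotentQuot_comap π ⊥ _ _ (MonoidHom.comap_bot π).symm ?_
        rw [isNilpotentQuot_bot]
        have h2 := hFnil 0 (Nat.pos_of_ne_zero hh) (hFnorm 0)
        have h3 : Group.IsNilpotent (F 1) := by
          rw [← isNilpotentQuot_bot]
          convert h2
          exact hF0.symm
        refine isNilpotent_of_injective (G' := F 1 × C)
          { toFun := fun x => (⟨x.1.1, x.2⟩, x.1.2)
            map_one' := rfl
            map_mul' := fun _ _ => rfl } ?_ inferInstance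
        rintro ⟨⟨a, b⟩, hx⟩ ⟨⟨c, d⟩, hy⟩ hxy
        simp only [MonoidHom.coe_mk, OneHom.coe_mk, Prod.mk.injEq] at hxy
        have h4 : a = c := congrArg Subtype.val hxy.1
        have h5 := hxy.2
        subst h4 h5
        rfl
      · have := hFnorm (k + 1)
        exact isNilpotentQuot_comap πH (F (k + 1)) _ _ rfl
          (hFnil (k + 1) (by omega) (hFnorm _))
  · rintro m ⟨K, hK0, hKn, hKnorm, hKmono, hKnil⟩
    obtain _ | m := m
    · exact absurd (hK0.symm.trans hKn) bot_ne_top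
    have hnorm : ∀ i, ((K (i + 1)).map πH).Normal := fun i => (hKnorm _).map _ hπH
    refine Nat.succ_le_succ (hmin m ⟨fun i => (K (i + 1)).map πH, ?_, ?_, hnorm, ?_, ?_⟩)
    · have h1 : K 1 ≤ π.ker := by
        refine hF.2.2 _ (hKnorm 1) ?_
        rw [← isNilpotentQuot_bot]
        convert hKnil 0 (Nat.succ_pos _) (hKnorm 0)
        exact hK0.symm
      rw [Subgroup.map_eq_bot_iff]
      intro g hg
      exact congrArg Prod.fst (MonoidHom.mem_ker.1 (h1 hg))
    · change (K (m + 1)).map πH = ⊤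
      rw [hKn, Subgroup.map_top_of_surjective _ hπH]
    · intro i hi
      exact Subgroup.map_mono (hKmono _ (by omega))
    · intro i hi hn
      have := hKnorm (i + 1)
      exact isNilpotentQuot_map πH (K (i + 1)) (K (i + 2)) _ rfl (hKnil _ (by omega) (hKnorm _))

/-! ### The module on which the minimal normal subgroup acts without fixed points -/

/-- In a finite group with a unique minimal normal subgroup `N`, every nontrivial normal subgroup
contains `N`. -/
theorem IsUniqueMinimalNormal.le {H : Type} [Group H] [Finite H] {N : Subgroup H}
    (hN : IsUniqueMinimalNormal H N) (M : Subgroup H) (hM : M.Normal) (hne : M ≠ ⊥) : N ≤ M := by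
  obtain ⟨K, hKM, hK⟩ := (Set.toFinite {K : Subgroup H | K.Normal ∧ K ≠ ⊥}).exists_le_minimal
    (a := M) ⟨hM, hne⟩
  have : IsMinimalNormal K := by
    refine ⟨hK.prop.1, hK.prop.2, fun K' hK' hle => ?_⟩
    by_cases h : K' = ⊥
    · exact Or.inl h
    · exact Or.inr (le_antisymm hle (hK.le_of_le ⟨hK', h⟩ hle))
  rw [← hN.2 K this]
  exact hKM

/-- The submodule of the regular representation of `H` over `k` consisting of the functions whose
sums over all left cosets of `N` vanish. -/
def augmentation (k : Type) [CommRing k] {H : Type} [Group H] (N : Subgroup H) [Fintype N] :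
    Submodule k (H → k) where
  carrier := {f | ∀ x, ∑ n : N, f (x * n) = 0}
  add_mem' := by
    intro f g hf hg x
    simp [Finset.sum_add_distrib, hf x, hg x]
  zero_mem' := by intro x; simp
  smul_mem' := by
    intro c f hf x
    simp [← Finset.mul_sum, hf x]

theorem mem_augmentation {k : Type} [CommRing k] {H : Type} [Group H] {N : Subgroup H}
    [Fintype N] {f : H → k} : f ∈ augmentation k N ↔ ∀ x, ∑ n : N, f (x * n) = 0 := Iff.rfl

/-- The action of `H` on `augmentation k N` by right translation. -/
def augmentationRep (k : Type) [CommRing k] {H : Type} [Group H] (N : Subgroup H) [Fintype N]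
    [hN : N.Normal] : Representation k H (augmentation k N) where
  toFun h :=
    { toFun := fun f => ⟨fun x => f.1 (x * h), by
        rw [mem_augmentation]
        intro x
        rw [← f.2 (x * h)]
        refine Fintype.sum_equiv (MulAut.conjNormal h⁻¹).toEquiv _ _ fun n => ?_
        simp [mul_assoc]⟩
      map_add' := fun _ _ => rfl
      map_smul' := fun _ _ => rfl }
  map_one' := by ext f x; simp
  map_mul' := by intro a b; ext f x; simp [mul_assoc]

theorem augmentationRep_sum (k : Type) [CommRing k] {H : Type} [Group H] (N : Subgroup H)
    [Fintype N] [N.Normal] (w : augmentation k N) :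
    ∑ n : N, augmentationRep k N (n : H) w = 0 := by
  ext x
  rw [AddSubmonoidClass.coe_finsetSum, Finset.sum_apply]
  exact w.2 x

theorem augmentation_nontrivial (k : Type) [CommRing k] [Nontrivial k] {H : Type} [Group H]
    (N : Subgroup H) [Fintype N] (hN : N ≠ ⊥) : Nontrivial (augmentation k N) := by
  classical
  obtain ⟨n, hnN, hn⟩ := N.bot_or_exists_ne_one.resolve_left hN
  have key : ∀ m ∈ N, ∀ x : H,
      ∑ a : N, (Pi.single m 1 : H → k) (x * a) = if x ∈ N then 1 else 0 := by
    intro m hm x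
    simp only [Pi.single_apply]
    split_ifs with hx
    · rw [Finset.sum_eq_single (⟨x⁻¹ * m, N.mul_mem (N.inv_mem hx) hm⟩ : N)]
      · simp
      · intro b _ hb
        rw [if_neg]
        rintro rfl
        exact hb (by ext; simp)
      · simp
    · refine Finset.sum_eq_zero fun a _ => if_neg ?_
      rintro rfl
      exact hx ((N.mul_mem_cancel_right a.2).1 hm)
  refine ⟨⟨⟨Pi.single 1 1 - Pi.single n 1, ?_⟩, 0, ?_⟩⟩
  · intro x
    simp only [Pi.sub_apply, Finset.sum_sub_distrib, key 1 N.one_mem, key n hnN, sub_self]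
  · intro h
    have := congrFun (congrArg Subtype.val h) 1
    simp [hn.symm] at this

/-- `H` acts faithfully on `augmentation (ZMod p) N`: otherwise `N` would act trivially, and then
the vanishing of the sum over `N` would give `|N| • w = 0` for all `w`, although `p ∤ |N|`. -/
theorem augmentationRep_faithful {H : Type} [Group H] [Finite H] (N : Subgroup H) [Fintype N]
    [N.Normal] (hN : IsUniqueMinimalNormal H N) (q : ℕ) [Fact q.Prime] (hNq : IsPGroup q N)
    (p : ℕ) [Fact p.Prime] (hpq : p ≠ q) (h : H)
    (hh : ∀ w, augmentationRep (ZMod p) N h w = w) : h = 1 := by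
  have := augmentation_nontrivial (ZMod p) N hN.1.2.1
  by_contra hne
  have hle : N ≤ (augmentationRep (ZMod p) N).ker := by
    refine hN.le _ (MonoidHom.normal_ker _) fun h0 => hne ?_
    have : h ∈ (augmentationRep (ZMod p) N).ker := by
      rw [MonoidHom.mem_ker]
      exact LinearMap.ext hh
    rwa [h0, Subgroup.mem_bot] at this
  obtain ⟨w, hw⟩ := exists_ne (0 : augmentation (ZMod p) N)
  have h1 := augmentationRep_sum (ZMod p) N w
  have h2 : ∀ n : N, augmentationRep (ZMod p) N (n : H) w = w := fun n =>
    LinearMap.congr_fun (MonoidHom.mem_ker.1 (hle n.2)) w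
  simp only [h2, Finset.sum_const, Finset.card_univ] at h1
  rw [← Nat.cast_smul_eq_nsmul (ZMod p)] at h1
  have h3 := (smul_eq_zero.1 h1).resolve_right hw
  rw [ZMod.natCast_eq_zero_iff, ← Nat.card_eq_fintype_card] at h3
  obtain ⟨n, hn⟩ := IsPGroup.iff_card.1 hNq
  rw [hn] at h3
  exact hpq ((Nat.prime_dvd_prime_iff_eq Fact.out Fact.out).1
    ((Fact.out : p.Prime).dvd_of_dvd_pow h3))

/-! ### Twisting by a character -/

section Twist

variable {p : ℕ} {H C : Type} [Group H] [CommGroup C] (u : C →* (ZMod p)ˣ)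

/-- The representation of `H × C` obtained from a representation of `H` by twisting with the
scalars `u c`. -/
def twist {M : Type} [AddCommGroup M] [Module (ZMod p) M] (ρ : Representation (ZMod p) H M) :
    H × C →* Module.End (ZMod p) M where
  toFun l := (u l.2 : ZMod p) • ρ l.1
  map_one' := by simp
  map_mul' := by
    intro a b
    simp [smul_smul, mul_comm]

theorem twist_apply {M : Type} [AddCommGroup M] [Module (ZMod p) M]
    (ρ : Representation (ZMod p) H M) (l : H × C) (m : M) :
    twist u ρ l m = (u l.2 : ZMod p) • ρ l.1 m := rfl

/-- The character `(h, c) ↦ (u c) ^ 2` of `H × C`. -/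
def sqChar : H × C →* ZMod p where
  toFun l := (u l.2 : ZMod p) ^ 2
  map_one' := by simp
  map_mul' := by intro a b; simp [mul_pow]

theorem sqChar_apply (l : H × C) : sqChar u l = (u l.2 : ZMod p) ^ 2 := rfl

variable {W : Type} [AddCommGroup W] [Module (ZMod p) W] (ρ : Representation (ZMod p) H W)

theorem twist_pairing (l : H × C) (f : Module.Dual (ZMod p) W) (w : W) :
    twist u ρ.dual l f (twist u ρ l w) = sqChar u l * f w := by
  have h : ρ l.1⁻¹ (ρ l.1 w) = w := by
    rw [← Module.End.mul_apply, ← map_mul]; simp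
  simp only [twist_apply, sqChar_apply, map_smul, LinearMap.smul_apply, Representation.dual_apply,
    Module.Dual.transpose_apply, LinearMap.comp_apply, h, smul_eq_mul]
  ring

/-- Elements of `H × C` acting trivially on `W` and its dual preserve the pairing, so `(u c) ^ 2 = 1`
and hence `c = 1`, as `C` has odd order. -/
theorem twist_faithful [Fact p.Prime] [Nontrivial W] (hu : Function.Injective u) (r : ℕ)
    (hrodd : Odd r) (hC : ∀ c : C, c ^ r = 1) (hρ : ∀ h, (∀ w, ρ h w = w) → h = 1) (l : H × C)
    (h1 : ∀ w, twist u ρ l w = w) (h2 : ∀ f, twist u ρ.dual l f = f) : l = 1 := by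
  obtain ⟨w, hw⟩ := exists_ne (0 : W)
  obtain ⟨f, hf⟩ := Heis.exists_dual_eq hw (1 : ZMod p)
  have h3 := twist_pairing u ρ l f w
  rw [h1, h2, hf, sqChar_apply, mul_one] at h3
  have h4 : l.2 ^ 2 = 1 := hu (by ext; simpa using h3.symm)
  have h5 : l.2 = 1 := by
    obtain ⟨k, hk⟩ := hrodd
    have := hC l.2
    rwa [hk, pow_succ, pow_mul, h4, one_pow, one_mul] at this
  have h6 : l.1 = 1 := hρ _ fun w => by
    have := h1 w
    rwa [twist_apply, h5, map_one, Units.val_one, one_smul] at this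
  exact Prod.ext h6 h5

theorem sum_twist_inl [Fact p.Prime] {N : Subgroup H} [Fintype N]
    (hN : ∀ w, ∑ n : N, ρ (n : H) w = 0) (w : W) :
    ∑ n : N, twist u ρ ((MonoidHom.inl H C).comp N.subtype n) w = 0 := by
  simpa [twist_apply] using hN w

theorem sum_dual {N : Subgroup H} [Fintype N]
    (hN : ∀ w, ∑ n : N, ρ (n : H) w = 0) (f : Module.Dual (ZMod p) W) :
    ∑ n : N, ρ.dual (n : H) f = 0 := by
  ext w
  have h : ∑ n : N, ρ ((n : H)⁻¹) w = 0 := by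
    rw [← hN w]
    exact Fintype.sum_equiv (Equiv.inv N) _ _ fun n => by simp
  have h' := congrArg f h
  rw [map_sum, map_zero] at h'
  rw [LinearMap.sum_apply]
  exact h'

theorem sum_twist_inr [Fact p.Prime] [Fintype C] [Nontrivial C] (hu : Function.Injective u)
    (w : W) : ∑ c : C, twist u ρ (MonoidHom.inr H C c) w = 0 := by
  have hne : (Units.coeHom (ZMod p)).comp u ≠ 1 := by
    intro h
    obtain ⟨c, hc⟩ := exists_ne (1 : C)
    exact hc (hu (by ext; simpa using DFunLike.congr_fun h c))
  have := sum_hom_units_eq_zero _ hne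
  simp only [twist_apply, MonoidHom.inr_apply, map_one, Module.End.one_apply, ← Finset.sum_smul]
  rw [show ∑ c : C, (u c : ZMod p) = 0 from this, zero_smul]

theorem sum_sqChar_inr [Fact p.Prime] [Fintype C] [Nontrivial C] (hu : Function.Injective u)
    (r : ℕ) (hrodd : Odd r) (hC : ∀ c : C, c ^ r = 1) :
    ∑ c : C, sqChar u (MonoidHom.inr H C c) = 0 := by
  refine sum_hom_units_eq_zero ((sqChar u).comp (MonoidHom.inr H C)) fun h => ?_
  obtain ⟨c, hc⟩ := exists_ne (1 : C)
  have h4 : c ^ 2 = 1 := hu (by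
    ext
    simpa [sqChar_apply] using DFunLike.congr_fun h c)
  obtain ⟨k, hk⟩ := hrodd
  have := hC c
  rw [hk, pow_succ, pow_mul, h4, one_pow, one_mul] at this
  exact hc this

end Twist

/-! ### Normal subgroups of prime power order in the complement -/

theorem eq_of_isPGroup_of_nontrivial {G : Type} [Group G] [Nontrivial G] {p q : ℕ}
    [Fact p.Prime] [Fact q.Prime] (hp : IsPGroup p G) (hq : IsPGroup q G) : p = q := by
  obtain ⟨g, hg⟩ := exists_ne (1 : G)
  have h1 := hp.dvd_orderOf hg
  obtain ⟨n, hn⟩ := IsPGroup.iff_orderOf.1 hq g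
  rw [hn] at h1
  exact (Nat.prime_dvd_prime_iff_eq Fact.out Fact.out).1 ((Fact.out : p.Prime).dvd_of_dvd_pow h1)

/-- `H × C` has no nontrivial normal `p`-subgroup. -/
theorem normal_pSubgroup_eq_bot {H C : Type} [Group H] [Finite H] [Group C] [Finite C]
    {N : Subgroup H} (hN : IsUniqueMinimalNormal H N) {p q r : ℕ} [Fact p.Prime] [Fact q.Prime]
    [Fact r.Prime] (hpq : p ≠ q) (hpr : p ≠ r) (hNq : IsPGroup q N) (hC : IsPGroup r C)
    (M : Subgroup (H × C)) (hM : M.Normal) (hMp : IsPGroup p M) : M = ⊥ := by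
  have h1 : M.map (MonoidHom.fst H C) = ⊥ := by
    by_contra hne
    have hle := hN.le _ (hM.map _ Prod.fst_surjective) hne
    have : Nontrivial N := (Subgroup.nontrivial_iff_ne_bot N).2 hN.1.2.1
    exact hpq (eq_of_isPGroup_of_nontrivial ((hMp.map _).to_le hle) hNq)
  have h2 : M.map (MonoidHom.snd H C) = ⊥ := by
    by_contra hne
    have : Nontrivial (M.map (MonoidHom.snd H C)) := (Subgroup.nontrivial_iff_ne_bot _).2 hne
    exact hpr (eq_of_isPGroup_of_nontrivial (hMp.map (MonoidHom.snd H C))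
      (hC.to_subgroup (M.map (MonoidHom.snd H C))))
  rw [Subgroup.map_eq_bot_iff] at h1 h2
  rw [Subgroup.eq_bot_iff_forall]
  intro x hx
  exact Prod.ext (h1 hx) (h2 hx)

/-! ### Divisibility of the degrees of the semidirect product -/

section Degrees

/-- The fixed vectors of a normal subgroup form an invariant subspace. -/
theorem InvTrivial.fixed_eq_bot_or_top {G V : Type} [Group G] [AddCommGroup V] [Module ℂ V]
    {ρ : Representation ℂ G V} (h : InvTrivial ρ) (K : Subgroup G) (hK : K.Normal) :
    (∀ v, (∀ k ∈ K, ρ k v = v) → v = 0) ∨ ∀ k ∈ K, ρ k = 1 := by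
  let U : Submodule ℂ V :=
    { carrier := {v | ∀ k ∈ K, ρ k v = v}
      add_mem' := by
        intro v w hv hw k hk
        rw [map_add, hv k hk, hw k hk]
      zero_mem' := by intro k _; simp
      smul_mem' := by
        intro c v hv k hk
        rw [map_smul, hv k hk] }
  have hU : ∀ g, ∀ v ∈ U, ρ g v ∈ U := by
    intro g v hv k hk
    have h1 := hv _ (hK.conj_mem' k hk g)
    rw [map_mul, map_mul] at h1
    calc ρ k (ρ g v) = (ρ g * ρ g⁻¹) (ρ k (ρ g v)) := by rw [← map_mul]; simp
      _ = ρ g ((ρ g⁻¹ * ρ k * ρ g) v) := rfl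
      _ = ρ g v := by rw [h1]
  rcases h U hU with h1 | h1
  · left
    intro v hv
    have : v ∈ U := hv
    rwa [h1, Submodule.mem_bot] at this
  · right
    intro k hk
    ext v
    have : v ∈ U := h1 ▸ Submodule.mem_top
    exact this k hk

open Heis

/-- The action of `w ∈ W` on `W* × 𝔽_p` by conjugation in the Heisenberg group. -/
def shear (p : ℕ) (W : Type) [AddCommGroup W] [Module (ZMod p) W] :
    Multiplicative W →* AddMonoid.End (Module.Dual (ZMod p) W × ZMod p) where
  toFun w :=
    { toFun := fun a => (a.1, a.2 + a.1 w.toAdd)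
      map_zero' := by simp
      map_add' := by
        intro a b
        ext1
        · rfl
        · simp [add_add_add_comm] }
  map_one' := by
    refine AddMonoidHom.ext fun a => Prod.ext rfl ?_
    change a.2 + a.1 0 = a.2
    simp
  map_mul' := by
    intro w w'
    refine AddMonoidHom.ext fun a => Prod.ext rfl ?_
    change a.2 + a.1 (w.toAdd + w'.toAdd) = a.2 + a.1 w'.toAdd + a.1 w.toAdd
    rw [map_add, add_comm (a.1 _), add_assoc]

theorem shear_apply {p : ℕ} {W : Type} [AddCommGroup W] [Module (ZMod p) W]
    (w : Multiplicative W) (a : Module.Dual (ZMod p) W × ZMod p) :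
    shear p W w a = (a.1, a.2 + a.1 w.toAdd) := rfl

/-- The embedding of `W` in the Heisenberg group. -/
def Heis.ofW (p : ℕ) (W : Type) [AddCommGroup W] [Module (ZMod p) W] :
    Multiplicative W →* Heis p W where
  toFun w := ⟨w.toAdd, 0, 0⟩
  map_one' := rfl
  map_mul' := by intro a b; ext <;> simp

variable {p : ℕ} [Fact p.Prime] {W : Type} [AddCommGroup W] [Module (ZMod p) W]
  {L : Type} [Group L] {τ : L →* Module.End (ZMod p) W}
  {σ : L →* Module.End (ZMod p) (Module.Dual (ZMod p) W)} {μ : L →* ZMod p}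
  {hμ : ∀ l f w, σ l f (τ l w) = μ l * f w}
  {V : Type} [AddCommGroup V] [Module ℂ V]
  (ρ : Representation ℂ (Heis p W ⋊[act τ σ μ hμ] L) V)

theorem rho_inr_mul_inl (l : L) (a : Heis p W) :
    ρ (SemidirectProduct.inr l) * ρ (SemidirectProduct.inl a) =
      ρ (SemidirectProduct.inl (act τ σ μ hμ l a)) * ρ (SemidirectProduct.inr l) := by
  rw [← map_mul, ← map_mul, SemidirectProduct.inl_aut]
  simp

theorem rho_inl_mul (a b : Heis p W) :
    ρ (SemidirectProduct.inl a) * ρ (SemidirectProduct.inl b) =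
      ρ (SemidirectProduct.inl (a * b)) := by
  rw [← map_mul, ← map_mul]

theorem rho_inl_one (a : Heis p W) (ha : a = 1) : ρ (SemidirectProduct.inl a) = 1 := by
  rw [ha, map_one, map_one]

variable [Finite W] [Module.Finite ℂ V]

/-- If `Z(E)` has no nonzero fixed vector, then `p` divides the dimension: the elements of `W`
permute the characters of the abelian subgroup `W* × 𝔽_p` of `E`, and a fixed character is trivial
on `𝔽_p = Z(E)`. -/
theorem p_dvd_finrank [Nontrivial W]
    (hZ : ∀ v, (∀ z : ZMod p, ρ (SemidirectProduct.inl (ofZ z)) v = v) → v = 0) :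
    p ∣ Module.finrank ℂ V := by
  have : Finite (Module.Dual (ZMod p) W) := Module.finite_of_finite (ZMod p)
  have hQ : IsPGroup p (Multiplicative W) := by
    intro w
    exact ⟨1, by rw [pow_one]; exact congrArg Multiplicative.ofAdd (p_nsmul w.toAdd)⟩
  refine dvd_finrank_of_no_fixed_weight (A := Module.Dual (ZMod p) W × ZMod p) hQ
    (fun a => ρ (SemidirectProduct.inl ⟨0, a.1, a.2⟩)) (rho_inl_one ρ _ rfl) ?_ (shear p W)
    (ρ.comp (SemidirectProduct.inl.comp (ofW p W))) ?_ ?_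
  · intro a b
    rw [rho_inl_mul]
    congr 2
    ext1 <;> simp
  · intro w a
    refine (rho_inl_mul ρ _ _).trans (Eq.trans ?_ (rho_inl_mul ρ _ _).symm)
    congr 2
    ext1 <;> simp [ofW, shear_apply]
  · intro ψ hψ
    rw [Submodule.eq_bot_iff]
    intro v hv
    refine hZ v fun z => ?_
    obtain ⟨w, hw⟩ := exists_ne (0 : W)
    obtain ⟨f, hf⟩ := exists_dual_eq hw z
    have h1 := hψ (Multiplicative.ofAdd w) (f, 0)
    rw [shear_apply] at h1
    have h2 : ψ ((f, 0) + (0, z)) = ψ (f, 0) := by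
      rw [← h1]
      simp [hf]
    rw [AddChar.map_add_eq_mul] at h2
    have h3 : ψ (0, z) = 1 := by
      have h4 : ψ (f, 0) ≠ 0 := (AddChar.val_isUnit ψ _).ne_zero
      exact mul_left_cancel₀ h4 (h2.trans (mul_one _).symm)
    have h5 := mem_weightSpace.1 hv (0, z)
    rw [h3, one_smul] at h5
    exact h5

omit [Finite W] in
/-- If `Z(E)` has no nonzero fixed vector and `Q` acts on `Z(E)` without trivial constituents, then
the prime of `Q` divides the dimension. -/
theorem dvd_finrank_of_center {Q : Type} [Group Q] [Fintype Q] {q : ℕ} [Fact q.Prime]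
    (hQ : IsPGroup q Q) (hqp : q ≠ p) (j : Q →* L) (hsum : ∑ x, μ (j x) = 0)
    (hZ : ∀ v, (∀ z : ZMod p, ρ (SemidirectProduct.inl (ofZ z)) v = v) → v = 0) :
    q ∣ Module.finrank ℂ V := by
  have hcop : (Fintype.card Q).Coprime p := by
    obtain ⟨n, hn⟩ := IsPGroup.iff_card.1 hQ
    rw [← Nat.card_eq_fintype_card, hn]
    exact Nat.Coprime.pow_left n ((Nat.coprime_primes Fact.out Fact.out).2 hqp)
  refine dvd_finrank_of_coprime (A := ZMod p) hQ
    (fun z => ρ (SemidirectProduct.inl (ofZ z))) (rho_inl_one ρ _ rfl) ?_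
    ((Module.toAddMonoidEnd (ZMod p) (ZMod p)).toMonoidHom.comp (μ.comp j))
    ((ρ.comp SemidirectProduct.inr).comp j) ?_ p p_nsmul hcop ?_ hZ
  · intro a b
    rw [rho_inl_mul]
    congr 2
    ext1 <;> simp [ofZ]
  · intro x a
    refine (rho_inr_mul_inl ρ (j x) (ofZ a)).trans ?_
    congr 3
    ext1
    · simp [ofZ]
    · simp [ofZ]
    · rfl
  · intro a
    change ∑ x, μ (j x) * a = 0
    rw [← Finset.sum_mul, hsum, zero_mul]

/-- The action of `L` on `E / Z(E) = W × W*`. -/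
def prodAct (τ : L →* Module.End (ZMod p) W)
    (σ : L →* Module.End (ZMod p) (Module.Dual (ZMod p) W)) :
    L →* AddMonoid.End (W × Module.Dual (ZMod p) W) where
  toFun l := ((τ l).prodMap (σ l)).toAddMonoidHom
  map_one' := by rw [map_one, map_one]; rfl
  map_mul' := by intro a b; rw [map_mul, map_mul]; rfl

/-- If `Z(E)` acts trivially, `E` has no nonzero fixed vector, and `Q` acts on `W` and on its dual
without trivial constituents, then the prime of `Q` divides the dimension. -/
theorem dvd_finrank_of_quotient {Q : Type} [Group Q] [Fintype Q] {q : ℕ} [Fact q.Prime]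
    (hQ : IsPGroup q Q) (hqp : q ≠ p) (j : Q →* L) (hτ : ∀ w, ∑ x, τ (j x) w = 0)
    (hσ : ∀ f, ∑ x, σ (j x) f = 0)
    (hZ : ∀ z : ZMod p, ρ (SemidirectProduct.inl (ofZ z)) = 1)
    (hE : ∀ v, (∀ a, ρ (SemidirectProduct.inl a) v = v) → v = 0) :
    q ∣ Module.finrank ℂ V := by
  have : Finite (Module.Dual (ZMod p) W) := Module.finite_of_finite (ZMod p)
  have hcop : (Fintype.card Q).Coprime p := by
    obtain ⟨n, hn⟩ := IsPGroup.iff_card.1 hQ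
    rw [← Nat.card_eq_fintype_card, hn]
    exact Nat.Coprime.pow_left n ((Nat.coprime_primes Fact.out Fact.out).2 hqp)
  have hmod : ∀ (w : W) (f : Module.Dual (ZMod p) W) (z : ZMod p),
      ρ (SemidirectProduct.inl ⟨w, f, z⟩) = ρ (SemidirectProduct.inl ⟨w, f, 0⟩) := by
    intro w f z
    rw [← mul_one (ρ (SemidirectProduct.inl ⟨w, f, 0⟩)), ← hZ z, rho_inl_mul]
    congr 2
    ext1 <;> simp [ofZ]
  refine dvd_finrank_of_coprime (A := W × Module.Dual (ZMod p) W) hQ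
    (fun a => ρ (SemidirectProduct.inl ⟨a.1, a.2, 0⟩)) (rho_inl_one ρ _ rfl) ?_
    ((prodAct τ σ).comp j)
    ((ρ.comp SemidirectProduct.inr).comp j) ?_ p p_nsmul hcop ?_ ?_
  · intro a b
    rw [rho_inl_mul]
    exact (hmod _ _ _).symm
  · intro x a
    refine (rho_inr_mul_inl ρ (j x) _).trans ?_
    congr 3
    ext1
    · rfl
    · rfl
    · simp
  · intro a
    refine Prod.ext ?_ ?_
    · rw [Prod.fst_sum]
      exact hτ a.1
    · rw [Prod.snd_sum]
      exact hσ a.2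
  · intro v hv
    refine hE v fun a => ?_
    exact (LinearMap.congr_fun (hmod a.w a.f a.z) v).trans (hv (a.w, a.f))

end Degrees

/-! ### The semidirect product is a CDG -/

section Main

open Heis

variable {p : ℕ} [Fact p.Prime] {W : Type} [AddCommGroup W] [Module (ZMod p) W]
  {H C : Type} [Group H] [CommGroup C]

/-- If `E` acts trivially on an irreducible representation of `E ⋊ (H × C)`, then the central
factor `C` of the quotient acts by scalars, so the representation stays irreducible on `H`. -/
theorem invTrivial_restrict {τ : H × C →* Module.End (ZMod p) W}
    {σ : H × C →* Module.End (ZMod p) (Module.Dual (ZMod p) W)} {μ : H × C →* ZMod p}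
    {hμ : ∀ l f w, σ l f (τ l w) = μ l * f w}
    {V : Type} [AddCommGroup V] [Module ℂ V] [Module.Finite ℂ V] [Nontrivial V]
    (ρ : Representation ℂ (Heis p W ⋊[act τ σ μ hμ] (H × C)) V) (h : InvTrivial ρ)
    (hE : ∀ a, ρ (SemidirectProduct.inl a) = 1) :
    InvTrivial ((ρ.comp SemidirectProduct.inr).comp (MonoidHom.inl H C)) := by
  have hg : ∀ g, ρ g = ρ (SemidirectProduct.inr g.right) := by
    intro g
    conv_lhs => rw [← SemidirectProduct.inl_left_mul_inr_right g, map_mul, hE, one_mul]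
  have hscalar : ∀ c : C, ∃ x : ℂ, ∀ v, ρ (SemidirectProduct.inr ((1 : H), c)) v = x • v := by
    intro c
    obtain ⟨x, hx⟩ := Module.End.exists_eigenvalue (ρ (SemidirectProduct.inr ((1 : H), c)))
    refine ⟨x, ?_⟩
    have htop := (h _ ?_).resolve_left hx
    · intro v
      have hv : v ∈ Module.End.eigenspace (ρ (SemidirectProduct.inr ((1 : H), c))) x :=
        htop.ge Submodule.mem_top
      exact Module.End.mem_eigenspace_iff.1 hv
    · intro g v hv
      rw [Module.End.mem_eigenspace_iff] at hv ⊢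
      have hcomm : ρ (SemidirectProduct.inr ((1 : H), c)) * ρ g =
          ρ g * ρ (SemidirectProduct.inr ((1 : H), c)) := by
        rw [hg g, ← map_mul, ← map_mul, ← map_mul, ← map_mul]
        congr 2
        exact Prod.ext (by simp) (mul_comm _ _)
      calc _ = (ρ (SemidirectProduct.inr ((1 : H), c)) * ρ g) v := rfl
        _ = ρ g (ρ (SemidirectProduct.inr ((1 : H), c)) v) := by rw [hcomm]; rfl
        _ = x • ρ g v := by rw [hv, map_smul]
  intro U hU
  refine h U fun g v hv => ?_
  obtain ⟨x, hx⟩ := hscalar g.right.2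
  have h1 : ρ g v = ρ (SemidirectProduct.inr (g.right.1, (1 : C)))
      (ρ (SemidirectProduct.inr ((1 : H), g.right.2)) v) := by
    rw [hg g, ← Module.End.mul_apply, ← map_mul, ← map_mul]
    simp
  rw [h1, hx, map_smul]
  exact U.smul_mem x (hU g.right.1 v hv)

/-- A criterion for being a CDG: a number with two distinct prime divisors is not a prime power. -/
theorem isCDG_of_forall {G H : Type} [Group G] [Group H] [Finite H] (hH : IsCDG H)
    (h : ∀ (V : Type) [AddCommGroup V] [Module ℂ V] [Module.Finite ℂ V] [Nontrivial V]
      (ρ : Representation ℂ G V), InvTrivial ρ → Module.finrank ℂ V ∈ charDegrees H ∨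
        ∃ a b : ℕ, a.Prime ∧ b.Prime ∧ a ≠ b ∧ a ∣ Module.finrank ℂ V ∧ b ∣ Module.finrank ℂ V) :
    IsCDG G := by
  rintro d ⟨V, hV, rfl⟩ hpow
  have := nontrivial_of_simple V hV
  rcases h V V.ρ (invTrivial_of_simple V hV) with h1 | ⟨a, b, ha, hb, hab, had, hbd⟩
  · exact hH _ h1 hpow
  · obtain ⟨c, -, hc⟩ := isPrimePow_iff_unique_prime_dvd.1 hpow
    exact absurd ((hc a ⟨ha, had⟩).trans (hc b ⟨hb, hbd⟩).symm) hab

/-- The degrees of `E ⋊ (H × C)`. Irreducible representations on which `Z(E)` acts nontrivially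
have degree divisible by `p` and `r`, those on which `Z(E)` but not `E` acts trivially have degree
divisible by `q` and `r`, and the remaining ones have degrees of `H`. -/
theorem isCDG_semidirect [Finite W] [Nontrivial W] [Finite H] [Fintype C] [Nontrivial C]
    (hH : IsCDG H) (N : Subgroup H) [Fintype N] {q r : ℕ} [Fact q.Prime] [Fact r.Prime]
    (hNq : IsPGroup q N) (hC : IsPGroup r C) (hCr : ∀ c : C, c ^ r = 1) (hrodd : Odd r)
    (hpq : p ≠ q) (hpr : p ≠ r) (hrq : r ≠ q) (u : C →* (ZMod p)ˣ) (hu : Function.Injective u)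
    (ρW : Representation (ZMod p) H W) (hsum : ∀ w, ∑ n : N, ρW (n : H) w = 0) :
    IsCDG (Heis p W ⋊[act (twist u ρW) (twist u ρW.dual) (sqChar u) (twist_pairing u ρW)]
      (H × C)) := by
  refine isCDG_of_forall hH ?_
  intro V _ _ _ _ ρ h
  rcases h.fixed_eq_bot_or_top (centerInl _ _ _ _) inferInstance with hZ | hZ
  · right
    have hZ' : ∀ v, (∀ z : ZMod p, ρ (SemidirectProduct.inl (ofZ z)) v = v) → v = 0 := by
      intro v hv
      refine hZ v ?_
      rintro _ ⟨a, ha, rfl⟩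
      have ha' := mem_center.1 ha
      have : a = ofZ a.z := Heis.ext ha'.1 ha'.2 rfl
      rw [this]
      exact hv a.z
    exact ⟨p, r, Fact.out, Fact.out, hpr, p_dvd_finrank ρ hZ',
      dvd_finrank_of_center ρ hC hpr.symm (MonoidHom.inr H C)
        (sum_sqChar_inr u hu r hrodd hCr) hZ'⟩
  · have hZ' : ∀ z : ZMod p, ρ (SemidirectProduct.inl (ofZ z)) = 1 := fun z =>
      hZ _ ⟨_, ofZ_mem_center z, rfl⟩
    have hnormal : (SemidirectProduct.inl : Heis p W →* Heis p W ⋊[act (twist u ρW)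
        (twist u ρW.dual) (sqChar u) (twist_pairing u ρW)] (H × C)).range.Normal := by
      rw [SemidirectProduct.range_inl_eq_ker_rightHom]
      infer_instance
    rcases h.fixed_eq_bot_or_top _ hnormal with hE | hE
    · right
      have hE' : ∀ v, (∀ a, ρ (SemidirectProduct.inl a) v = v) → v = 0 := by
        intro v hv
        refine hE v ?_
        rintro _ ⟨a, rfl⟩
        exact hv a
      refine ⟨q, r, Fact.out, Fact.out, hrq.symm, ?_, ?_⟩
      · exact dvd_finrank_of_quotient ρ hNq hpq.symm ((MonoidHom.inl H C).comp N.subtype)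
          (sum_twist_inl u ρW hsum) (sum_twist_inl u ρW.dual (sum_dual ρW hsum)) hZ' hE'
      · exact dvd_finrank_of_quotient ρ hC hpr.symm (MonoidHom.inr H C)
          (sum_twist_inr u ρW hu) (sum_twist_inr u ρW.dual hu) hZ' hE'
    · left
      exact mem_charDegrees _ (invTrivial_restrict ρ h fun a => hE _ ⟨a, rfl⟩)

end Main

/-- The unit group of `𝔽_p` has an element of order `r`. -/
theorem exists_injective_units {p r : ℕ} [Fact p.Prime] [Fact r.Prime] (hrp : r ∣ p - 1) :
    ∃ u : Multiplicative (ZMod r) →* (ZMod p)ˣ, Function.Injective u := by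
  have hcard : Nat.card (ZMod p)ˣ = p - 1 := by
    rw [Nat.card_eq_fintype_card, ZMod.card_units]
  obtain ⟨g, hg⟩ := exists_prime_orderOf_dvd_card' (G := (ZMod p)ˣ) r (hcard ▸ hrp)
  let f : ℤ →+ Additive (ZMod p)ˣ := zmultiplesHom _ (Additive.ofMul g)
  have hf : f r = 0 := by
    change (r : ℤ) • Additive.ofMul g = 0
    rw [natCast_zsmul, ← ofMul_pow, ← hg, pow_orderOf_eq_one]
    rfl
  refine ⟨AddMonoidHom.toMultiplicativeLeft (ZMod.lift r ⟨f, hf⟩), ?_⟩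
  have : Function.Injective (ZMod.lift r ⟨f, hf⟩) := by
    rw [ZMod.lift_injective]
    intro m hm
    have h1 : g ^ m = 1 := hm
    rw [ZMod.intCast_zmod_eq_zero_iff_dvd, ← hg]
    exact orderOf_dvd_iff_zpow_eq_one.2 h1
  exact this

/-! ### The construction -/

/-- **Theorem (Statement 8).** Let `H` be a finite CDG with a unique minimal normal subgroup
`N`, where `N` is a `q`-group. Let `p ≠ q` be a prime such that `p - 1` is divisible by an odd
prime `r ≠ q`. Then there are an extraspecial `p`-group `E` and an action of `H × Z_r` on `E`
by automorphisms such that `G = E ⋊ (H × Z_r)` is a CDG, the Fitting subgroup of `G` is `E`,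
and `Z(E)` is the unique minimal normal subgroup of `G`; in particular, if `H` is solvable,
the Fitting height of `G` is one more than that of `H`. -/
theorem construction (H : Type) [Group H] [Finite H] (hH : IsCDG H)
    (N : Subgroup H) (hN : IsUniqueMinimalNormal H N)
    (q : ℕ) (hq : q.Prime) (hNq : IsPGroup q ↥N)
    (p : ℕ) (hp : p.Prime) (hpq : p ≠ q)
    (r : ℕ) (hr : r.Prime) (hrodd : Odd r) (hrq : r ≠ q) (hrp : r ∣ p - 1) :
    ∃ (E : Type) (_ : Group E) (_ : Finite E),
      IsExtraspecial p E ∧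
      ∃ φ : H × Multiplicative (ZMod r) →* MulAut E,
        IsCDG (E ⋊[φ] (H × Multiplicative (ZMod r))) ∧
        IsFittingSubgroup
          (SemidirectProduct.inl : E →* E ⋊[φ] (H × Multiplicative (ZMod r))).range ∧
        IsUniqueMinimalNormal (E ⋊[φ] (H × Multiplicative (ZMod r)))
          ((Subgroup.center E).map
            (SemidirectProduct.inl : E →* E ⋊[φ] (H × Multiplicative (ZMod r)))) ∧
        (IsSolvable H → ∀ h : ℕ, FittingHeightIs H h →
          FittingHeightIs (E ⋊[φ] (H × Multiplicative (ZMod r))) (h + 1)) := by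
  have : Fact q.Prime := ⟨hq⟩
  have : Fact p.Prime := ⟨hp⟩
  have : Fact r.Prime := ⟨hr⟩
  have : NeZero r := ⟨hr.ne_zero⟩
  have : N.Normal := hN.1.1
  have := Fintype.ofFinite N
  have hNne := hN.1.2.1
  have hpr : p ≠ r := by
    rintro rfl
    have := Nat.le_of_dvd (Nat.sub_pos_of_lt hp.one_lt) hrp
    have := hp.one_lt
    omega
  obtain ⟨u, hu⟩ := exists_injective_units hrp
  have hCr : ∀ c : Multiplicative (ZMod r), c ^ r = 1 := fun c =>
    congrArg Multiplicative.ofAdd (Heis.p_nsmul c.toAdd)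
  have hC : IsPGroup r (Multiplicative (ZMod r)) := fun c => ⟨1, by rw [pow_one]; exact hCr c⟩
  have : Nontrivial (ZMod r) := ZMod.nontrivial_iff.2 hr.ne_one
  have : Nontrivial (Multiplicative (ZMod r)) := inferInstance
  let W := augmentation (ZMod p) N
  let ρW : Representation (ZMod p) H W := augmentationRep (ZMod p) N
  have : Nontrivial W := augmentation_nontrivial (ZMod p) N hNne
  have hfaith := twist_faithful u ρW hu r hrodd hCr
    (augmentationRep_faithful N hN q hNq p hpq)
  have hF := Heis.isFittingSubgroup (twist u ρW) (twist u ρW.dual) (sqChar u)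
    (twist_pairing u ρW) hfaith (normal_pSubgroup_eq_bot hN hpq hpr hNq hC)
  refine ⟨Heis p W, inferInstance, inferInstance, Heis.isExtraspecial,
    Heis.act (twist u ρW) (twist u ρW.dual) (sqChar u) (twist_pairing u ρW), ?_, hF, ?_, ?_⟩
  · exact isCDG_semidirect hH N hNq hC hCr hrodd hpq hpr hrq u hu ρW
      (augmentationRep_sum (ZMod p) N)
  · exact Heis.isUniqueMinimalNormal _ _ _ _ hfaith
  · intro _ h hh
    have : Nontrivial N := (Subgroup.nontrivial_iff_ne_bot N).2 hNne
    have : Nontrivial H := N.subtype_injective.nontrivial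
    have : Nontrivial (Heis p W ⋊[Heis.act (twist u ρW) (twist u ρW.dual) (sqChar u)
        (twist_pairing u ρW)] (H × Multiplicative (ZMod r))) :=
      (SemidirectProduct.rightHom_surjective).nontrivial
    have : Group.IsNilpotent (Multiplicative (ZMod r)) := inferInstance
    rw [SemidirectProduct.range_inl_eq_ker_rightHom] at hF
    exact fittingHeight_succ SemidirectProduct.rightHom
      SemidirectProduct.rightHom_surjective hF h hh
end

section
/- For every integer i ≥ 1, there exists a finite solvable group G_i such that 1 is the only prime power among the degrees of the irreducible complex characters of G_i, the Fitting height of G_i equals i + 1, and G_i has a unique minimal normal subgroup. -/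
/-! ### Character degrees -/

open CategoryTheory in
/-- Schur's lemma and its converse: a representation is simple iff it is nonzero and its only
endomorphisms are the scalars. -/
theorem simple_iff_scalar {G : Type} [Group G] [Finite G] (W : FDRep ℂ G) :
    Simple W ↔ Nontrivial W ∧
      ∀ f : Module.End ℂ W, (∀ g, f * W.ρ g = W.ρ g * f) → ∃ c : ℂ, f = c • 1 := by
  have e := Representation.linHom.invariantsEquivFDRepHom W W
  rw [FDRep.simple_iff_end_is_rank_one, ← e.finrank_eq]
  have mem (f : Module.End ℂ W) : f ∈ (Representation.linHom W.ρ W.ρ).invariants ↔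
      ∀ g, f * W.ρ g = W.ρ g * f := by
    rw [Representation.mem_invariants]
    refine forall_congr' fun g => ?_
    simp only [Representation.linHom_apply]
    constructor
    · intro h
      conv_lhs => rw [← h]
      ext x
      have : W.ρ g⁻¹ (W.ρ g x) = x := by
        rw [← Module.End.mul_apply, ← map_mul]; simp
      simp [this]
    · intro h
      have h' : W.ρ g ∘ₗ f = f ∘ₗ W.ρ g := h.symm
      rw [← LinearMap.comp_assoc, h']
      ext x
      simp [← Module.End.mul_apply, ← map_mul]
  constructor
  · intro h
    have nt : Nontrivial (Module.End ℂ W) := by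
      by_contra hn
      rw [not_nontrivial_iff_subsingleton] at hn
      have : Subsingleton (Representation.linHom W.ρ W.ρ).invariants := inferInstance
      rw [Module.finrank_zero_of_subsingleton] at h
      exact zero_ne_one h
    refine ⟨?_, ?_⟩
    · by_contra hn
      rw [not_nontrivial_iff_subsingleton] at hn
      exact not_subsingleton (Module.End ℂ W) inferInstance
    · intro f hf
      have h1 : (1 : Module.End ℂ W) ∈ (Representation.linHom W.ρ W.ρ).invariants :=
        (mem 1).2 (by simp)
      have h0 : (⟨1, h1⟩ : (Representation.linHom W.ρ W.ρ).invariants) ≠ 0 := by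
        intro h
        exact one_ne_zero (congrArg Subtype.val h)
      obtain ⟨c, hc⟩ := (finrank_eq_one_iff_of_nonzero' _ h0).1 h ⟨f, (mem f).2 hf⟩
      exact ⟨c, (congrArg Subtype.val hc).symm⟩
  · rintro ⟨hn, h⟩
    have h1 : (1 : Module.End ℂ W) ∈ (Representation.linHom W.ρ W.ρ).invariants :=
      (mem 1).2 (by simp)
    have h0 : (⟨1, h1⟩ : (Representation.linHom W.ρ W.ρ).invariants) ≠ 0 := by
      intro h
      exact one_ne_zero (congrArg Subtype.val h)
    refine (finrank_eq_one_iff_of_nonzero' _ h0).2 fun w => ?_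
    obtain ⟨c, hc⟩ := h w.1 ((mem w.1).1 w.2)
    exact ⟨c, Subtype.ext hc.symm⟩

/-- The action of `G × kˣ` on the additive group of `V` (written multiplicatively) in which `G` acts
through `ρ` and `kˣ` by scalar multiplication. -/
def scalarAction {k V G : Type} [Field k] [AddCommGroup V] [Module k V] [Group G]
    (ρ : G →* Module.End k V) : G × kˣ →* MulAut (Multiplicative V) where
  toFun a :=
    { toFun := fun v => .ofAdd ((a.2 : k) • ρ a.1 v.toAdd)
      invFun := fun v => .ofAdd (((a⁻¹).2 : k) • ρ (a⁻¹).1 v.toAdd)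
      left_inv := fun v => by
        simp [← Module.End.mul_apply, ← map_mul, smul_smul]
      right_inv := fun v => by
        simp [← Module.End.mul_apply, ← map_mul, smul_smul]
      map_mul' := fun v w => by simp }
  map_one' := by ext; simp
  map_mul' a b := by ext; simp [mul_smul]

/-- The affine group `V ⋊ (G × kˣ)` attached to a linear representation `ρ` of `G` on `V`. -/
abbrev AffineExt {k V G : Type} [Field k] [AddCommGroup V] [Module k V] [Group G]
    (ρ : G →* Module.End k V) : Type :=
  Multiplicative V ⋊[scalarAction ρ] (G × kˣ)

section step
variable {k V G : Type} [Field k] [AddCommGroup V] [Module k V] [Group G]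
  (ρ : G →* Module.End k V)

theorem scalarAction_apply (a : G × kˣ) (v : Multiplicative V) :
    scalarAction ρ a v = .ofAdd ((a.2 : k) • ρ a.1 v.toAdd) := rfl

open SemidirectProduct

instance [Finite V] [Finite G] [Finite k] : Finite (AffineExt ρ) :=
  Finite.of_equiv _ (SemidirectProduct.equivProd (φ := scalarAction ρ)).symm

theorem mul_inl_eq (h : AffineExt ρ) (u : Multiplicative V) :
    h * inl u = inl (scalarAction ρ h.right u) * h := by
  refine SemidirectProduct.ext ?_ ?_
  · simp [mul_comm]
  · simp

open CategoryTheory in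
/-- The two alternatives correspond to whether or not the translations act trivially on `W`. -/
theorem degree_cases [Finite V] [Finite G] [Finite k] (W : FDRep ℂ (AffineExt ρ)) [hW : Simple W] :
    Module.finrank ℂ W ∈ charDegrees G ∨ Nat.card kˣ ∣ Module.finrank ℂ W := by
  classical
  have := Fintype.ofFinite V
  have := Fintype.ofFinite kˣ
  have := Fintype.ofFinite (Multiplicative V)
  obtain ⟨hnt, hsc⟩ := (simple_iff_scalar W).1 hW
  set E : Module.End ℂ W := ∑ u : Multiplicative V, W.ρ (inl u) with hE
  obtain ⟨s, hs⟩ := hsc E (fun h => by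
    rw [hE, Finset.sum_mul, Finset.mul_sum,
      ← Equiv.sum_comp (scalarAction ρ h.right).toEquiv]
    refine Finset.sum_congr rfl fun u _ => ?_
    rw [← map_mul, ← map_mul, mul_inl_eq]
    rfl)
  rcases eq_or_ne s 0 with rfl | hs0
  -- `W` has no nonzero vector fixed by the translations, and is then a free `ℂ[kˣ]`-module.
  · right
    rw [zero_smul] at hs
    have htr (c : kˣ) (hc : c ≠ 1) : LinearMap.trace ℂ W (W.ρ (inr (1, c))) = 0 := by
      have h1 (u : Multiplicative V) : LinearMap.trace ℂ W (W.ρ (inl u) * W.ρ (inr (1, c))) =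
          LinearMap.trace ℂ W (W.ρ (inr (1, c))) := by
        have hc' : (1 - (c : k)) ≠ 0 := by
          rw [sub_ne_zero]; exact fun h => hc (Units.ext h.symm)
        -- `v` solves `u = v - c • v`, so that conjugating `c` by the translation `v` gives `u · c`.
        set v : Multiplicative V := .ofAdd ((1 - (c : k))⁻¹ • u.toAdd)
        have hv : u = v * scalarAction ρ (1, c) v⁻¹ := by
          refine Multiplicative.toAdd.injective ?_
          have : u.toAdd = (1 - (c : k))⁻¹ • u.toAdd - (c : k) • (1 - (c : k))⁻¹ • u.toAdd := by
            rw [smul_smul, ← sub_smul, ← one_sub_mul, mul_inv_cancel₀ hc', one_smul]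
          simpa [v, scalarAction_apply, sub_eq_add_neg] using this
        have : (inl u * inr (1, c) : AffineExt ρ) = inl v * (inr (1, c) * inl v⁻¹) := by
          rw [mul_inl_eq, right_inr, ← mul_assoc, ← map_mul, ← hv]
        rw [← map_mul, this, map_mul, LinearMap.trace_mul_comm, ← map_mul, mul_assoc, ← map_mul]
        simp
      have h2 : ∑ u : Multiplicative V, LinearMap.trace ℂ W (W.ρ (inl u) * W.ρ (inr (1, c))) = 0 := by
        rw [← map_sum, ← Finset.sum_mul, ← hE, hs, zero_mul, map_zero]
      simpa [h1] using h2
    have hinv : Invertible (Nat.card kˣ : ℂ) :=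
      invertibleOfNonzero (by exact_mod_cast Nat.card_pos.ne')
    set σ : Representation ℂ kˣ W := W.ρ.comp (inr.comp (MonoidHom.inr G kˣ)) with hσ
    have h3 := σ.card_inv_mul_sum_char_eq_finrank
    rw [Finset.sum_eq_single 1, Representation.char_one, inv_mul_eq_iff_eq_mul₀] at h3
    · exact ⟨_, by exact_mod_cast h3⟩
    · exact_mod_cast Nat.card_pos.ne'
    · intro c _ hc
      exact htr c hc
    · simp
  -- The translations act trivially, so `kˣ` is central in the image of the group.
  · left
    have htriv (u : Multiplicative V) : W.ρ (inl u) = 1 := by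
      have h1 : W.ρ (inl u) * E = E := by
        rw [hE, Finset.mul_sum]
        simp_rw [← map_mul]
        exact Equiv.sum_comp (Equiv.mulLeft u) (fun x => W.ρ (inl x))
      rw [hs, mul_smul_comm, mul_one] at h1
      exact smul_right_injective _ hs0 h1
    have hρ (h : AffineExt ρ) : W.ρ h = W.ρ (inr h.right) := by
      conv_lhs => rw [← inl_left_mul_inr_right h]
      rw [map_mul, htriv, one_mul]
    have hcen (c : kˣ) : ∃ t : ℂ, W.ρ (inr (1, c)) = t • 1 := by
      refine hsc _ fun h => ?_
      rw [hρ h, ← map_mul, ← map_mul, ← map_mul, ← map_mul]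
      congr 2
      ext <;> simp [mul_comm]
    set σ : Representation ℂ G W := W.ρ.comp (inr.comp (MonoidHom.inl G kˣ)) with hσ
    refine ⟨FDRep.of σ, ?_, rfl⟩
    rw [simple_iff_scalar]
    refine ⟨hnt, fun f hf => hsc f fun h => ?_⟩
    obtain ⟨t, ht⟩ := hcen h.right.2
    have : W.ρ h = W.ρ (inr (h.right.1, 1)) * W.ρ (inr (1, h.right.2)) := by
      rw [hρ, ← map_mul, ← map_mul]; simp
    have h5 : f * W.ρ (inr (h.right.1, 1)) = W.ρ (inr (h.right.1, 1)) * f := hf h.right.1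
    rw [this, ht]
    rw [mul_smul_comm, mul_one, mul_smul_comm, smul_mul_assoc, h5]

theorem AffineExt.isCDG [Finite V] [Finite G] [Finite k] (hG : IsCDG G)
    (hk : 6 ∣ Nat.card kˣ) : IsCDG (AffineExt ρ) := by
  rintro _ ⟨W, hW, rfl⟩ hp
  rcases degree_cases ρ W with h | h
  · exact hG _ h hp
  · exfalso
    have h6 := hk.trans h
    obtain ⟨p, n, hpp, hn, hpn⟩ := hp
    rw [← hpn] at h6
    have h2 := (Nat.prime_dvd_prime_iff_eq Nat.prime_two hpp.nat_prime).1
      (Nat.prime_two.dvd_of_dvd_pow (dvd_trans (by norm_num) h6))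
    have h3 := (Nat.prime_dvd_prime_iff_eq Nat.prime_three hpp.nat_prime).1
      (Nat.prime_three.dvd_of_dvd_pow (dvd_trans (by norm_num) h6))
    omega
end step

/-! ### Monoliths -/

/-- `N` is a nontrivial normal subgroup contained in every nontrivial normal subgroup of `G`. -/
def IsMonolith {G : Type*} [Group G] (N : Subgroup G) : Prop :=
  N.Normal ∧ N ≠ ⊥ ∧ ∀ M : Subgroup G, M.Normal → M ≠ ⊥ → N ≤ M

theorem IsMonolith.isUniqueMinimalNormal {G : Type*} [Group G] {N : Subgroup G}
    (h : IsMonolith N) : IsUniqueMinimalNormal G N := by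
  obtain ⟨h1, h2, h3⟩ := h
  refine ⟨⟨h1, h2, fun M hM hMN => or_iff_not_imp_left.2 fun hb => hMN.antisymm (h3 M hM hb)⟩, ?_⟩
  rintro M ⟨m1, m2, m3⟩
  exact ((m3 N h1 (h3 M m1 m2)).resolve_left h2).symm

/-! ### Fitting series and Fitting height -/

section fitting
variable {G H : Type*} [Group G] [Group H]

theorem IsNilpotentQuot.map {A B : Subgroup G} [A.Normal] (h : IsNilpotentQuot A B)
    (f : G →* H) (A' : Subgroup H) [A'.Normal] (hA : A.map f ≤ A') :
    IsNilpotentQuot A' (B.map f) := by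
  unfold IsNilpotentQuot at *
  have hle : A ≤ A'.comap f := Subgroup.map_le_iff_le_comap.1 hA
  have e : (B.map f).map (QuotientGroup.mk' A') =
      (B.map (QuotientGroup.mk' A)).map (QuotientGroup.map A A' f hle) := by
    rw [Subgroup.map_map, Subgroup.map_map]
    rfl
  rw [e]
  exact Group.nilpotent_of_surjective
    ((QuotientGroup.map A A' f hle).subgroupMap (B.map (QuotientGroup.mk' A)))
    (MonoidHom.subgroupMap_surjective _ _)

theorem isNilpotentQuot_iff_of_bot {B : Subgroup G} {A : Subgroup G} [A.Normal] (hA : A = ⊥) :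
    IsNilpotentQuot A B ↔ Group.IsNilpotent B := by
  subst hA
  unfold IsNilpotentQuot
  refine Group.isNilpotent_congr (Subgroup.equivMapOfInjective B _ ?_).symm
  rw [← MonoidHom.ker_eq_bot_iff, QuotientGroup.ker_mk']

theorem IsNilpotentQuot.comap {A B : Subgroup H} [A.Normal] (h : IsNilpotentQuot A B)
    (f : G →* H) [hn : (A.comap f).Normal] : IsNilpotentQuot (A.comap f) (B.comap f) := by
  unfold IsNilpotentQuot at *
  let q : G ⧸ A.comap f →* H ⧸ A := QuotientGroup.map (A.comap f) A f le_rfl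
  have hq : Function.Injective q := by
    rw [injective_iff_map_eq_one]
    intro x
    induction x using QuotientGroup.induction_on with
    | H x => 
      intro hx
      simpa [q, QuotientGroup.eq_one_iff] using hx
  have hle : ((B.comap f).map (QuotientGroup.mk' (A.comap f))).map q ≤
      B.map (QuotientGroup.mk' A) := by
    rw [Subgroup.map_map]
    rintro _ ⟨x, hx, rfl⟩
    exact ⟨f x, hx, rfl⟩
  have h1 : Group.IsNilpotent (((B.comap f).map (QuotientGroup.mk' (A.comap f))).map q) := by
    have := h
    exact (Group.isNilpotent_congr (Subgroup.subgroupOfEquivOfLe hle)).1 inferInstance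
  exact (Group.isNilpotent_congr (Subgroup.equivMapOfInjective _ q hq)).2 h1

theorem IsFittingSeries.map {F : ℕ → Subgroup G} {n : ℕ} (h : IsFittingSeries F n)
    {f : G →* H} (hf : Function.Surjective f) : IsFittingSeries (fun i => (F i).map f) n := by
  obtain ⟨h0, h1, h2, h3, h4⟩ := h
  refine ⟨by simp [h0], by simpa [h1] using Subgroup.map_top_of_surjective f hf,
    fun i => (h2 i).map f hf, fun i hi => Subgroup.map_mono (h3 i hi), fun i hi hn => ?_⟩
  have := h2 i
  exact (h4 i hi (h2 i)).map f _ le_rfl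

/-- A Fitting series whose first term dies in a quotient yields a shorter one of that quotient. -/
theorem IsFittingSeries.tail {F : ℕ → Subgroup G} {n : ℕ} (h : IsFittingSeries F (n + 1))
    {f : G →* H} (hf : Function.Surjective f) (h1 : F 1 ≤ f.ker) :
    IsFittingSeries (fun i => (F (i + 1)).map f) n := by
  obtain ⟨e0, e1, e2, e3, e4⟩ := h.map hf
  refine ⟨(Subgroup.map_eq_bot_iff _).2 h1, e1, fun i => e2 _, fun i hi => e3 _ (by omega),
    fun i hi hn => e4 _ (by omega) hn⟩

/-- If the kernel of `G → H` is nilpotent and contains every nilpotent normal subgroup of `G`, i.e. is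
the Fitting subgroup of `G`, then the Fitting height of `G` is one more than that of `H`. -/
theorem fittingHeightIs_succ [Nontrivial G] {n : ℕ} (hH : FittingHeightIs H n) {f : G →* H}
    (hf : Function.Surjective f) (hk : Group.IsNilpotent f.ker)
    (hN : ∀ N : Subgroup G, N.Normal → Group.IsNilpotent N → N ≤ f.ker) :
    FittingHeightIs G (n + 1) := by
  obtain ⟨⟨F, h0, h1, h2, h3, h4⟩, hmin⟩ := hH
  refine ⟨⟨fun i => match i with
      | 0 => ⊥
      | i + 1 => (F i).comap f, rfl, by simp [h1], ?_, ?_, ?_⟩, ?_⟩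
  · rintro (_ | i)
    · infer_instance
    · exact (h2 i).comap f
  · rintro (_ | i) hi
    · exact bot_le
    · exact Subgroup.comap_mono (h3 i (by omega))
  · rintro (_ | i) hi hn
    · refine (isNilpotentQuot_iff_of_bot rfl).2 ?_
      change Group.IsNilpotent ((F 0).comap f)
      rw [h0]
      exact hk
    · have := h2 i
      exact (h4 i (by omega) (h2 i)).comap f
  · rintro (_ | m) ⟨F, hF⟩
    · exact absurd (hF.1.symm.trans hF.2.1) bot_ne_top
    · refine Nat.succ_le_succ (hmin m ⟨_, hF.tail hf (hN _ (hF.2.2.1 1) ?_)⟩)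
      have := hF.2.2.1 0
      exact (isNilpotentQuot_iff_of_bot hF.1).1 (hF.2.2.2.2 0 (by omega) this)

/-- The hypothesis `1 ≤ n` excludes the trivial group, of height `0`, whose product with `C` may have
height `1`. -/
theorem FittingHeightIs.prod {n : ℕ} (hn : 1 ≤ n) (h : FittingHeightIs G n) {C : Type*}
    [CommGroup C] : FittingHeightIs (G × C) n := by
  obtain ⟨⟨F, h0, h1, h2, h3, h4⟩, hmin⟩ := h
  obtain ⟨n, rfl⟩ : ∃ m, n = m + 1 := ⟨n - 1, by omega⟩
  set f := MonoidHom.fst G C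
  refine ⟨⟨fun i => match i with
      | 0 => ⊥
      | i + 1 => (F (i + 1)).comap f, rfl, by simp [h1], ?_, ?_, ?_⟩, ?_⟩
  · rintro (_ | i)
    · infer_instance
    · exact (h2 (i + 1)).comap f
  · rintro (_ | i) hi
    · exact bot_le
    · exact Subgroup.comap_mono (h3 (i + 1) (by omega))
  · rintro (_ | i) hi hn
    · refine (isNilpotentQuot_iff_of_bot rfl).2 ?_
      have hF0 := h2 0
      have hF1 : Group.IsNilpotent (F 1) :=
        (isNilpotentQuot_iff_of_bot h0).1 (h4 0 (by omega) hF0)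
      refine Subgroup.isNilpotent_of_ker_le_center (f.subgroupComap (F 1)) ?_
      rintro ⟨⟨x, c⟩, hx⟩ hx1
      have hx2 : x = 1 := congrArg Subtype.val hx1
      subst hx2
      rw [Subgroup.mem_center_iff]
      rintro ⟨⟨y, d⟩, hy⟩
      ext
      · simp
      · simp [mul_comm]
    · have := h2 (i + 1)
      exact (h4 (i + 1) (by omega) (h2 (i + 1))).comap f
  · rintro m ⟨F, hF⟩
    exact hmin m ⟨_, hF.map (f := f) Prod.fst_surjective⟩

theorem fittingHeightIs_one_of_commGroup {C : Type*} [CommGroup C] [Nontrivial C] :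
    FittingHeightIs C 1 := by
  refine ⟨⟨fun i => if i = 0 then ⊥ else ⊤, by simp, by simp, ?_, ?_, ?_⟩, ?_⟩
  · intro i; infer_instance
  · intro i hi; simp
  · intro i hi hn
    unfold IsNilpotentQuot
    infer_instance
  · rintro (_ | m) ⟨F, hF⟩
    · exact absurd (hF.1.symm.trans hF.2.1) bot_ne_top
    · omega

end fitting

/-! ### Normal structure of the affine group -/

section structureTheory
variable {k V G : Type} [Field k] [AddCommGroup V] [Module k V] [Group G]
  (ρ : G →* Module.End k V)

open SemidirectProduct

/-- The linear representation `ρ` of `G` on `V` is faithful and irreducible. -/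
def IsFaithfulIrreducible : Prop :=
  Function.Injective ρ ∧ Nontrivial V ∧
    ∀ W : Submodule k V, (∀ g, ∀ w ∈ W, ρ g w ∈ W) → W = ⊥ ∨ W = ⊤

variable {ρ}

/-- An element `(g, c)` acting trivially makes `g` act as the scalar `c⁻¹`; by faithfulness `g` is
then central in `G`, so `g = 1` and hence `c = 1`. -/
theorem scalarAction_injective (hρ : IsFaithfulIrreducible ρ) (hZ : Subgroup.center G = ⊥) :
    Function.Injective (scalarAction ρ) := by
  rw [injective_iff_map_eq_one]
  rintro ⟨g, c⟩ h
  have h1 (v : V) : (c : k) • ρ g v = v :=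
    congrArg Multiplicative.toAdd (DFunLike.congr_fun h (Multiplicative.ofAdd v))
  have h2 (v : V) : ρ g v = ((c⁻¹ : kˣ) : k) • v := by
    conv_rhs => rw [← h1 v]
    rw [smul_smul, Units.inv_mul, one_smul]
  have hg : g = 1 := by
    have : g ∈ Subgroup.center G := by
      rw [Subgroup.mem_center_iff]
      intro x
      refine hρ.1 (LinearMap.ext fun v => ?_)
      simp [h2]
    simpa [hZ] using this
  subst hg
  obtain ⟨v, hv⟩ := (nontrivial_iff_exists_ne (0 : V)).1 hρ.2.1
  have h3 := h1 v
  rw [map_one, Module.End.one_apply] at h3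
  have : (c : k) = 1 := smul_left_injective k hv (by simpa using h3)
  ext <;> simp [this]

/-- The translation subgroup `V` of `V ⋊ (G × kˣ)`, as the kernel of the projection onto the
complement. -/
def translations (ρ : G →* Module.End k V) : Subgroup (AffineExt ρ) :=
  (rightHom : AffineExt ρ →* G × kˣ).ker

instance : (translations ρ).Normal := by unfold translations; infer_instance

theorem mem_translations {x : AffineExt ρ} : x ∈ translations ρ ↔ x.right = 1 := Iff.rfl

theorem inl_mem_translations (v : Multiplicative V) : (inl v : AffineExt ρ) ∈ translations ρ := by
  simp [mem_translations]

theorem eq_inl_of_mem {x : AffineExt ρ} (hx : x ∈ translations ρ) : x = inl x.left := by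
  rw [mem_translations] at hx
  conv_lhs => rw [← inl_left_mul_inr_right x, hx, map_one, mul_one]

/-- When the complement acts faithfully, the translation subgroup is its own centralizer. -/
theorem mem_translations_of_commute (hinj : Function.Injective (scalarAction ρ)) {x : AffineExt ρ}
    (hx : ∀ u, x * inl u = inl u * x) : x ∈ translations ρ := by
  rw [mem_translations]
  refine hinj (MulEquiv.ext fun u => ?_)
  have h1 := hx u
  rw [mul_inl_eq] at h1
  rw [map_one]
  exact inl_injective (mul_right_cancel h1)

/-- For a normal subgroup `M`, the vectors whose translation lies in `M` form a `G`-invariant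
subspace. If it is `V`, then `M` contains all translations; if it is `0`, then `M` centralizes the
translations, so consists of translations, so is trivial. -/
theorem isMonolith_translations (hρ : IsFaithfulIrreducible ρ)
    (hinj : Function.Injective (scalarAction ρ)) : IsMonolith (translations ρ) := by
  refine ⟨inferInstance, ?_, fun M hM hMb => ?_⟩
  · obtain ⟨v, hv⟩ := (nontrivial_iff_exists_ne (0 : V)).1 hρ.2.1
    intro hb
    have h1 : (inl (.ofAdd v) : AffineExt ρ) ∈ translations ρ := inl_mem_translations _
    rw [hb, Subgroup.mem_bot, ← map_one inl] at h1
    exact hv (congrArg Multiplicative.toAdd (inl_injective h1))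
  have hact (a : G × kˣ) (v : Multiplicative V) (hv : (inl v : AffineExt ρ) ∈ M) :
      (inl (scalarAction ρ a v) : AffineExt ρ) ∈ M := by
    rw [inl_aut, map_inv]
    exact hM.conj_mem _ hv _
  let W : Submodule k V :=
    { carrier := {v | (inl (.ofAdd v) : AffineExt ρ) ∈ M}
      zero_mem' := by
        change (inl 1 : AffineExt ρ) ∈ M
        rw [map_one]; exact M.one_mem
      add_mem' := fun {a b} ha hb => by
        change (inl (.ofAdd a * .ofAdd b) : AffineExt ρ) ∈ M
        rw [map_mul]; exact M.mul_mem ha hb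
      smul_mem' := fun c v hv => by
        rcases eq_or_ne c 0 with rfl | hc
        · rw [zero_smul]
          change (inl 1 : AffineExt ρ) ∈ M
          rw [map_one]; exact M.one_mem
        · have := hact (1, Units.mk0 c hc) (.ofAdd v) hv
          simpa [scalarAction_apply] using this }
  have hW (v : V) : v ∈ W ↔ (inl (.ofAdd v) : AffineExt ρ) ∈ M := Iff.rfl
  rcases hρ.2.2 W (fun g w hw => by
    have := hact (g, 1) (.ofAdd w) hw
    rw [scalarAction_apply] at this
    simpa [hW] using this) with h | h
  · exfalso
    have hone (u : Multiplicative V) (hu : (inl u : AffineExt ρ) ∈ M) : u = 1 := by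
      have : u.toAdd ∈ W := hu
      rw [h, Submodule.mem_bot] at this
      exact this
    refine hMb ((Subgroup.eq_bot_iff_forall _).2 fun x hx => ?_)
    have hxt : x ∈ translations ρ := by
      refine mem_translations_of_commute hinj fun u => ?_
      have h2 : (inl (scalarAction ρ x.right u * u⁻¹) : AffineExt ρ) ∈ M := by
        have h3 : x * (inl u * x⁻¹ * (inl u)⁻¹) ∈ M :=
          M.mul_mem hx (hM.conj_mem _ (M.inv_mem hx) _)
        rw [← mul_assoc, ← mul_assoc, mul_inl_eq] at h3
        simpa using h3
      rw [mul_inl_eq, mul_inv_eq_one.1 (hone _ h2)]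
    rw [eq_inl_of_mem hxt] at hx ⊢
    rw [hone _ hx, map_one]
  · intro x hx
    rw [eq_inl_of_mem hx]
    have : x.left.toAdd ∈ W := by rw [h]; trivial
    exact this

/-- The centre of a nontrivial nilpotent normal subgroup `L` is a nontrivial normal subgroup of the
whole group, so contains all translations, which are therefore centralized by `L`. -/
theorem le_translations_of_isNilpotent (hinj : Function.Injective (scalarAction ρ))
    (hm : IsMonolith (translations ρ)) (L : Subgroup (AffineExt ρ)) [hL : L.Normal]
    (hn : Group.IsNilpotent L) : L ≤ translations ρ := by
  rcases eq_or_ne L ⊥ with rfl | hb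
  · exact bot_le
  have : Nontrivial L := (Subgroup.nontrivial_iff_ne_bot L).2 hb
  have hc : (Subgroup.center L).map L.subtype ≠ ⊥ := by
    rw [Ne, Subgroup.map_eq_bot_iff_of_injective _ L.subtype_injective]
    exact Group.IsNilpotent.center_ne_bot L
  have hle := hm.2.2 _ ConjAct.normal_of_characteristic_of_normal hc
  intro x hx
  refine mem_translations_of_commute hinj fun u => ?_
  obtain ⟨z, hz, hzu⟩ := hle (inl_mem_translations u)
  rw [← hzu]
  exact congrArg Subtype.val (Subgroup.mem_center_iff.1 hz ⟨x, hx⟩)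

theorem center_affineExt (hinj : Function.Injective (scalarAction ρ)) {c : kˣ} (hc : c ≠ 1) :
    Subgroup.center (AffineExt ρ) = ⊥ := by
  refine (Subgroup.eq_bot_iff_forall _).2 fun x hx => ?_
  rw [Subgroup.mem_center_iff] at hx
  have hxt := eq_inl_of_mem (mem_translations_of_commute hinj fun u => (hx (inl u)).symm)
  have h1 := hx (inr (1, c))
  rw [hxt, mul_inl_eq] at h1
  have h2 := inl_injective (mul_right_cancel h1)
  rw [right_inr, scalarAction_apply, map_one] at h2
  have h3 : (c : k) • x.left.toAdd = x.left.toAdd := congrArg Multiplicative.toAdd h2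
  have h4 : ((c : k) - 1) • x.left.toAdd = 0 := by rw [sub_smul, h3, one_smul, sub_self]
  rw [smul_eq_zero, sub_eq_zero] at h4
  have h5 : x.left = 1 := h4.resolve_left fun h => hc (Units.ext h)
  rw [hxt, h5, map_one]

theorem isSolvable_affineExt (hG : Group.IsSolvable G) : Group.IsSolvable (AffineExt ρ) :=
  Group.isSolvable_of_ker_le_range (inl : Multiplicative V →* AffineExt ρ) rightHom
    range_inl_eq_ker_rightHom.ge

/-- The inductive hypothesis: `G` is a finite solvable CDG of Fitting height `n` with trivial centre
and a monolith. The trivial centre is what lets the scalars `kˣ` be adjoined to a faithful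
representation of `G` without losing faithfulness. -/
def IsGood (G : Type) [Group G] (n : ℕ) : Prop :=
  Finite G ∧ Group.IsSolvable G ∧ IsCDG G ∧ FittingHeightIs G n ∧ Subgroup.center G = ⊥ ∧
    ∃ N : Subgroup G, IsMonolith N

theorem isGood_affineExt [Finite k] [Finite V] [Finite G] (hρ : IsFaithfulIrreducible ρ)
    (hk : 6 ∣ Nat.card kˣ)
    (hsol : Group.IsSolvable G) (hcdg : IsCDG G) (hZ : Subgroup.center G = ⊥) {n : ℕ}
    (hF : FittingHeightIs (G × kˣ) n) : IsGood (AffineExt ρ) (n + 1) := by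
  have hinj := scalarAction_injective hρ hZ
  have hm := isMonolith_translations hρ hinj
  have hku : Nontrivial kˣ := by
    rw [← Finite.one_lt_card_iff_nontrivial]
    have := Nat.le_of_dvd Nat.card_pos hk
    omega
  obtain ⟨c, hc⟩ := (nontrivial_iff_exists_ne (1 : kˣ)).1 hku
  have : Nontrivial (AffineExt ρ) :=
    have := (Subgroup.nontrivial_iff_ne_bot _).2 hm.2.1
    (translations ρ).subtype_injective.nontrivial
  refine ⟨inferInstance, isSolvable_affineExt hsol, AffineExt.isCDG ρ hcdg hk, ?_,
    center_affineExt hinj hc, _, hm⟩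
  refine fittingHeightIs_succ hF (f := rightHom) rightHom_surjective ?_
    fun N hN hnil => le_translations_of_isNilpotent hinj hm N hnil
  rw [← range_inl_eq_ker_rightHom]
  exact Group.nilpotent_of_surjective
    (inl : Multiplicative V →* AffineExt ρ).rangeRestrict (MonoidHom.rangeRestrict_surjective _)

end structureTheory

/-! ### Existence of faithful irreducible modules, and the induction -/

/-- In coprime characteristic the regular module is a sum of simple submodules, so a nontrivial
element of the monolith acts nontrivially on one of them. The kernel of that submodule does not
contain the monolith, so it is trivial. -/
theorem exists_faithfulIrreducible {G : Type} [Group G] [Finite G] {N : Subgroup G}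
    (hN : IsMonolith N) (k : Type) [Field k] [Finite k] [NeZero (Nat.card G : k)] :
    ∃ (V : Type) (_ : AddCommGroup V) (_ : Module k V) (_ : Finite V)
      (ρ : G →* Module.End k V), IsFaithfulIrreducible ρ := by
  classical
  let A := MonoidAlgebra k G
  let one (g : G) : A := MonoidAlgebra.of k G g
  obtain ⟨n, hnN, hn1⟩ := (Subgroup.ne_bot_iff_exists_ne_one.1 hN.2.1 : _) |> fun ⟨a, ha⟩ =>
    (⟨a.1, a.2, fun h => ha (Subtype.ext h)⟩ : ∃ n, n ∈ N ∧ n ≠ 1)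
  obtain ⟨S, hS, x, hx⟩ : ∃ S : Submodule A A, IsSimpleModule A S ∧ ∃ x ∈ S, one n * x ≠ x := by
    by_contra! hcon
    let K : Submodule A A := sSup {m : Submodule A A | IsSimpleModule A m}
    have hK : K = ⊤ := IsSemisimpleModule.sSup_simples_eq_top A A
    have hall (x : A) (hx : x ∈ K) : one n * x = x := by
      rw [show K = _ from sSup_eq_iSup' {m : Submodule A A | IsSimpleModule A m}] at hx
      refine Submodule.iSup_induction _ (motive := fun x => one n * x = x) hx ?_ ?_ ?_
      · exact fun m x hx => hcon m.1 m.2 x hx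
      · exact mul_zero _
      · intro a b ha hb
        rw [mul_add, ha, hb]
    have h1 := hall 1 (by rw [hK]; trivial)
    rw [mul_one] at h1
    exact hn1 (MonoidAlgebra.of_injective (h1.trans (map_one (MonoidAlgebra.of k G)).symm))
  have : Finite A := Module.finite_of_finite k
  let ρ : G →* Module.End k S :=
    (Algebra.lsmul k k S : A →ₐ[k] Module.End k S).toMonoidHom.comp (MonoidAlgebra.of k G)
  have hρ (g : G) (s : S) : ρ g s = one g • s := rfl
  refine ⟨S, inferInstance, inferInstance, inferInstance, ρ, ?_, IsSimpleModule.nontrivial A S, ?_⟩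
  · rw [← MonoidHom.ker_eq_bot_iff]
    by_contra hb
    have hle := hN.2.2 ρ.ker inferInstance hb
    have h1 : ρ n = 1 := hle hnN
    have h2 : one n • (⟨x, hx.1⟩ : S) = ⟨x, hx.1⟩ := by rw [← hρ, h1]; rfl
    exact hx.2 (congrArg Subtype.val h2)
  · intro W hW
    let W' : Submodule A S :=
      { W with
        smul_mem' := fun a s hs => by
          change a • s ∈ W
          induction a using MonoidAlgebra.induction_on with
          | of g => exact hW g s hs
          | add a b ha hb => rw [add_smul]; exact W.add_mem ha hb
          | smul r a ha => rw [smul_assoc]; exact W.smul_mem r ha }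
    have hW' (s : S) : s ∈ W' ↔ s ∈ W := Iff.rfl
    rcases eq_bot_or_eq_top W' with h | h
    · left
      ext s
      rw [← hW', h, Submodule.mem_bot, Submodule.mem_bot]
    · right
      ext s
      rw [← hW', h]
      simp

theorem isCDG_of_commGroup {C : Type} [CommGroup C] [Finite C] : IsCDG C := by
  rintro _ ⟨W, hW, rfl⟩
  intro hp
  obtain ⟨hnt, hs⟩ := (simple_iff_scalar W).1 hW
  have hsc (f : Module.End ℂ W) : ∃ c : ℂ, f = c • 1 := by
    refine hs f fun g => ?_
    obtain ⟨c, hc⟩ := hs (W.ρ g) fun h => by rw [← map_mul, ← map_mul, mul_comm]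
    rw [hc, mul_smul_comm, smul_mul_assoc, one_mul, mul_one]
  have h1 : Module.finrank ℂ (Module.End ℂ W) = 1 := by
    rw [finrank_eq_one_iff_of_nonzero' (1 : Module.End ℂ W) one_ne_zero]
    intro f
    obtain ⟨c, hc⟩ := hsc f
    exact ⟨c, hc.symm⟩
  change Module.finrank ℂ (W →ₗ[ℂ] W) = 1 at h1
  rw [Module.finrank_linearMap] at h1
  exact Nat.eq_one_of_mul_eq_one_left h1

/-- The base case is the affine group `𝔽₇ ⋊ 𝔽₇ˣ`. The inductive step takes `k = ZMod p` for a prime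
`p ≡ 1 [MOD 6]` exceeding `Nat.card G`. -/
theorem exists_isGood (n : ℕ) : ∃ (G : Type) (_ : Group G), IsGood G (n + 2) := by
  induction n with
  | zero =>
    have : Fact (Nat.Prime 7) := ⟨by norm_num⟩
    let ρ : Unit →* Module.End (ZMod 7) (ZMod 7) := 1
    have hρ : IsFaithfulIrreducible ρ :=
      ⟨fun _ _ _ => rfl, inferInstance, fun W _ => eq_bot_or_eq_top W⟩
    have hcard : Nat.card (ZMod 7)ˣ = 6 := by
      rw [Nat.card_eq_fintype_card, ZMod.card_units]
    have hnt : Nontrivial (ZMod 7)ˣ := by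
      rw [← Finite.one_lt_card_iff_nontrivial, hcard]; norm_num
    exact ⟨AffineExt ρ, inferInstance, isGood_affineExt hρ (by rw [hcard]) inferInstance
      isCDG_of_commGroup (Subsingleton.elim _ _) fittingHeightIs_one_of_commGroup⟩
  | succ n ih =>
    obtain ⟨G, _, hfin, hsol, hcdg, hF, hZ, N, hN⟩ := ih
    obtain ⟨p, hp, hlt, hmod⟩ := Nat.exists_prime_gt_modEq_one (k := 6) (Nat.card G) (by norm_num)
    have := Fact.mk hp
    have : NeZero (Nat.card G : ZMod p) := ⟨by
      rw [Ne, ZMod.natCast_eq_zero_iff]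
      exact Nat.not_dvd_of_pos_of_lt Nat.card_pos hlt⟩
    obtain ⟨V, _, _, _, ρ, hρ⟩ := exists_faithfulIrreducible hN (ZMod p)
    refine ⟨AffineExt ρ, inferInstance, isGood_affineExt hρ ?_ hsol hcdg hZ (hF.prod (by omega))⟩
    rw [Nat.card_eq_fintype_card, ZMod.card_units]
    exact (Nat.modEq_iff_dvd' hp.one_lt.le).1 hmod.symm

/-- **Theorem (Statement 9).** For every `i ≥ 1` there is a finite solvable CDG of Fitting
height `i + 1` having a unique minimal normal subgroup. -/
theorem exists_solvable_CDG_uniqueMinimalNormal (i : ℕ) (hi : 1 ≤ i) :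
    ∃ (G : Type) (_ : Group G) (_ : Finite G),
      IsSolvable G ∧ IsCDG G ∧ FittingHeightIs G (i + 1) ∧
      ∃ N : Subgroup G, IsUniqueMinimalNormal G N := by
  obtain ⟨n, rfl⟩ := Nat.exists_eq_add_of_le hi
  obtain ⟨G, _, hfin, hsol, hcdg, hF, -, N, hN⟩ := exists_isGood n
  refine ⟨G, inferInstance, hfin, hsol, hcdg, ?_, N, hN.isUniqueMinimalNormal⟩
  rwa [show 1 + n + 1 = n + 2 by omega]
end
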